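/- arXiv:0809.0603 — 3 statements merged into one kernel-verified Lean document; each statement's English description precedes it below -/
import Mathlib

section
/- Let b be a bispecial factor of a Sturmian word u containing both letters, with return words r₀(b), r₁(b). Then at least one return word r of b satisfies |b|/2 < |r| ≤ |b|, this r is a prefix of b, and rr is a factor of u. Consequently, r is a primitive factor of u with index at least 2 and length greater than |b|/2. -/
open Filter Topology

namespace SturmianPaper

variable {A : Type*} [DecidableEq A]

/-- The factor `w` occurs in the infinite word `u` at position `i`. -/
def FactorAt (u : ℕ → A) (w : List A) (i : ℕ) : Prop :=
  w = (List.range w.length).map fun j => u (i + j)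

/-- `w` is a factor of the infinite word `u`. -/
def IsFactor (u : ℕ → A) (w : List A) : Prop := ∃ i, FactorAt u w i

/-- The factor complexity of `u`: the number of factors of length `n`. -/
noncomputable def complexity (u : ℕ → A) (n : ℕ) : ℕ :=
  Set.ncard {w : List A | IsFactor u w ∧ w.length = n}

/-- A Sturmian word: complexity `n + 1` for every `n` (this forces aperiodicity). -/
def IsSturmian (u : ℕ → A) : Prop := ∀ n, complexity u n = n + 1

/-- `u` is eventually periodic. -/
def EventuallyPeriodic (u : ℕ → A) : Prop :=
  ∃ p > 0, ∃ N, ∀ n ≥ N, u (n + p) = u n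

/-- `u` is uniformly recurrent: every factor occurs with bounded gaps. -/
def UniformlyRecurrent (u : ℕ → A) : Prop :=
  ∀ w, IsFactor u w → ∃ B, ∀ k, ∃ i, k ≤ i ∧ i < k + B ∧ FactorAt u w i

/-- The number of occurrences of `w` in the finite word `x`. -/
def occCount (x w : List A) : ℕ :=
  ((List.range (x.length + 1)).filter fun i => decide (w <+: x.drop i)).length

/-- `v` is a return word of the factor `w` of `u`. -/
def IsReturnWord (u : ℕ → A) (w v : List A) : Prop :=
  v ≠ [] ∧ IsFactor u (v ++ w) ∧ w <+: v ++ w ∧ occCount (v ++ w) w = 2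

/-- Recurrence function: `R n + 1` is the maximal length of a complete return word
`v ++ w` over factors `w` of length `n` and return words `v` of `w`. -/
noncomputable def recFun (u : ℕ → A) (n : ℕ) : ℕ :=
  sSup {m | ∃ w v, IsFactor u w ∧ w.length = n ∧ IsReturnWord u w v ∧
    m + 1 = v.length + w.length}

/-- `v = w ^ (|v| / |w|)`: `v` is a fractional power of `w`,
i.e. a prefix of `w w w ⋯` of length at least `|w|`. -/
def FracPow (w v : List A) : Prop :=
  w ≠ [] ∧ w.length ≤ v.length ∧ ∀ i < v.length, v[i]? = w[i % w.length]?

/-- The set of rational exponents `r` (viewed inside `ℝ`) such that `w ^ r ∈ L(u)`. -/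
def expSet (u : ℕ → A) (w : List A) : Set ℝ :=
  {r | ∃ v, IsFactor u v ∧ FracPow w v ∧ r = (v.length : ℝ) / (w.length : ℝ)}

/-- The index of the factor `w` in `u`: `sup {r ∈ ℚ | w ^ r ∈ L(u)}`. -/
noncomputable def index (u : ℕ → A) (w : List A) : ℝ := sSup (expSet u w)

/-- A finite word is primitive if it is not a proper integer power. -/
def Primitive (w : List A) : Prop :=
  w ≠ [] ∧ ∀ (z : List A) (k : ℕ), 2 ≤ k → w ≠ (List.replicate k z).flatten

/-- `w` is left special in `u` (alphabet `Bool`, `true = A`, `false = B`). -/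
def LeftSpecial (u : ℕ → Bool) (w : List Bool) : Prop :=
  IsFactor u (true :: w) ∧ IsFactor u (false :: w)

/-- `w` is right special in `u`. -/
def RightSpecial (u : ℕ → Bool) (w : List Bool) : Prop :=
  IsFactor u (w ++ [true]) ∧ IsFactor u (w ++ [false])

/-- The Sturmian word of slope `α` and intercept `x₀`, coding the orbit of `x₀`
under the exchange of the two intervals `I_A = [0, α)` (coded `true`) and
`I_B = [α, 1)` (coded `false`); the exchange is the rotation `x ↦ x + (1 - α) mod 1`. -/
noncomputable def sturmianWord (α x₀ : ℝ) : ℕ → Bool :=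
  fun n => decide (Int.fract (x₀ + n * (1 - α)) < α)

/-- The Sturmian morphism `A ↦ AᶜB`, `B ↦ A` applied to a finite word. -/
def phiW (c : ℕ) (w : List Bool) : List Bool :=
  (w.map fun b => if b then List.replicate c true ++ [false] else [true]).flatten

/-- The Sturmian morphism `A ↦ AᶜB`, `B ↦ A` applied to an infinite word. -/
noncomputable def phiInf (c : ℕ) (u : ℕ → Bool) : ℕ → Bool :=
  fun n => (phiW c ((List.range (n + 1)).map u)).getD n false


/-- the window of length `n` at position `i` -/
def win (u : ℕ → Bool) (n i : ℕ) : List Bool := (List.range n).map fun j => u (i + j)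

theorem win_length (u : ℕ → Bool) (n i : ℕ) : (win u n i).length = n := by simp [win]

theorem win_eq_iff {u : ℕ → Bool} {n i j : ℕ} :
    win u n i = win u n j ↔ ∀ k < n, u (i + k) = u (j + k) := by
  simp [win]

theorem win_succ (u : ℕ → Bool) (n i : ℕ) : win u (n+1) i = win u n i ++ [u (i+n)] := by
  simp [win, List.range_succ]

theorem win_add (u : ℕ → Bool) (m n i : ℕ) : win u (m+n) i = win u m i ++ win u n (i+m) := by
  induction n with
  | zero => simp [win]
  | succ n ih => rw [← add_assoc, win_succ, ih, win_succ, List.append_assoc, add_assoc]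

theorem factorAt_iff {u : ℕ → Bool} {w : List Bool} {i : ℕ} :
    FactorAt u w i ↔ w = win u w.length i := Iff.rfl

theorem factorAt_win (u : ℕ → Bool) (n i : ℕ) : FactorAt u (win u n i) i := by
  rw [factorAt_iff, win_length]

theorem win_getElem? {u : ℕ → Bool} {n i k : ℕ} (h : k < n) :
    (win u n i)[k]? = some (u (i+k)) := by
  simp [win, h]

/-- one step of a window -/
theorem win_step {u : ℕ → Bool} {n i j : ℕ} (h : win u n i = win u n j)
    (h2 : u (i+n) = u (j+n)) : win u n (i+1) = win u n (j+1) := by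
  rw [win_eq_iff] at *
  intro k hk
  by_cases hk' : k + 1 < n
  · have := h (k+1) hk'
    rwa [show i + 1 + k = i + (k+1) by ring, show j + 1 + k = j + (k+1) by ring]
  · have : n = k + 1 := by omega
    subst this
    rwa [show i + 1 + k = i + (k+1) by ring, show j + 1 + k = j + (k+1) by ring]

theorem range_eq (u : ℕ → Bool) (n : ℕ) :
    {w : List Bool | IsFactor u w ∧ w.length = n} = Set.range (win u n) := by
  ext w
  constructor
  · rintro ⟨⟨i, hi⟩, rfl⟩
    exact ⟨i, hi.symm⟩
  · rintro ⟨i, rfl⟩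
    exact ⟨⟨i, factorAt_win u n i⟩, win_length u n i⟩

theorem range_fin (u : ℕ → Bool) (n : ℕ) : (Set.range (win u n)).Finite := by
  apply (List.finite_length_eq Bool n).subset
  rintro _ ⟨i, rfl⟩
  exact win_length u n i

theorem range_card {u : ℕ → Bool} (h : IsSturmian u) (n : ℕ) :
    (Set.range (win u n)).ncard = n + 1 := by
  rw [← range_eq]; exact h n

theorem not_ep {u : ℕ → Bool} (h : IsSturmian u) {p N : ℕ} (hp : 0 < p)
    (hper : ∀ n ≥ N, u (n + p) = u n) : False := by
  have key : ∀ t, ∃ t' < N + p, ∀ k, u (t + k) = u (t' + k) := by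
    intro t
    induction t using Nat.strong_induction_on with
    | _ t ih =>
      by_cases ht : t < N + p
      · exact ⟨t, ht, fun _ => rfl⟩
      · obtain ⟨t', h1, h2⟩ := ih (t - p) (by omega)
        refine ⟨t', h1, fun k => ?_⟩
        rw [← h2, ← hper (t - p + k) (by omega)]
        congr 1; omega
  have hsub : Set.range (win u (N+p)) ⊆ (win u (N+p)) '' (Set.Iio (N+p)) := by
    rintro _ ⟨t, rfl⟩
    obtain ⟨t', h1, h2⟩ := key t
    exact ⟨t', h1, (win_eq_iff.2 fun k _ => h2 k).symm⟩
  have h1 := Set.ncard_le_ncard hsub ((Set.finite_Iio _).image _)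
  have h2 := Set.ncard_image_le (f := win u (N+p)) (Set.finite_Iio (N+p))
  have h3 : (Set.Iio (N+p)).ncard = N + p := by
    rw [← Finset.coe_Iio, Set.ncard_coe_finset]; simp
  rw [range_card h] at h1
  omega

theorem not_det {u : ℕ → Bool} (h : IsSturmian u) (N n : ℕ) :
    ∃ i ≥ N, ∃ j ≥ N, win u n i = win u n j ∧ u (i+n) ≠ u (j+n) := by
  by_contra hc
  push Not at hc
  obtain ⟨x, hx, y, hy, hxy, hw⟩ :=
    Set.Infinite.exists_ne_map_eq_of_mapsTo (s := Set.Ici N) (t := Set.range (win u n))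
      (f := win u n) (Set.Ici_infinite N) (fun i _ => ⟨i, rfl⟩) (range_fin u n)
  wlog hlt : x < y generalizing x y
  · exact this y hy x hx hxy.symm hw.symm (by omega)
  simp only [Set.mem_Ici] at hx hy
  have hk : ∀ k, win u n (x + k) = win u n (y + k) := by
    intro k
    induction k with
    | zero => exact hw
    | succ k ih => exact win_step ih (hc (x+k) (by omega) (y+k) (by omega) ih)
  apply not_ep h (p := y - x) (N := x + n) (by omega)
  intro m hm
  have := hc (x + (m - n - x)) (by omega) (y + (m - n - x)) (by omega) (hk _)
  rw [show m + (y - x) = y + (m - n - x) + n by omega, ← this]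
  congr 1; omega

theorem tail_card {u : ℕ → Bool} (h : IsSturmian u) (N n : ℕ) :
    n + 1 ≤ (win u n '' Set.Ici N).ncard := by
  have fin : ∀ n, (win u n '' Set.Ici N).Finite :=
    fun n => (range_fin u n).subset (Set.image_subset_range _ _)
  induction n with
  | zero =>
    have : 0 < (win u 0 '' Set.Ici N).ncard :=
      (Set.ncard_pos (fin 0)).2 ⟨_, N, Set.mem_Ici.2 le_rfl, rfl⟩
    omega
  | succ n ih =>
    obtain ⟨i, hi, j, hj, hw, hne⟩ := not_det h N n
    have hsub : win u n '' Set.Ici N ⊆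
        List.dropLast '' ((win u (n+1) '' Set.Ici N) \ {win u (n+1) i}) := by
      rintro _ ⟨t, ht, rfl⟩
      by_cases hti : win u (n+1) t = win u (n+1) i
      · refine ⟨win u (n+1) j, ⟨⟨j, hj, rfl⟩, ?_⟩, ?_⟩
        · intro hh
          exact hne ((win_eq_iff.1 hh) n (by omega)).symm
        · have : win u n t = win u n i :=
            win_eq_iff.2 fun k hk => (win_eq_iff.1 hti) k (by omega)
          rw [win_succ]; simp [this, hw]
      · exact ⟨win u (n+1) t, ⟨⟨t, ht, rfl⟩, hti⟩, by rw [win_succ]; simp⟩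
    have h1 := Set.ncard_le_ncard hsub (((fin (n+1)).diff).image _)
    have h2 := Set.ncard_image_le (f := List.dropLast)
      ((fin (n+1)).diff (t := {win u (n+1) i}))
    have h3 := Set.ncard_diff_singleton_add_one
      (show win u (n+1) i ∈ win u (n+1) '' Set.Ici N from ⟨i, hi, rfl⟩) (fin (n+1))
    omega

theorem recurrent {u : ℕ → Bool} (h : IsSturmian u) (n i N : ℕ) :
    ∃ j ≥ N, win u n j = win u n i := by
  have := Set.eq_of_subset_of_ncard_le (Set.image_subset_range (win u n) (Set.Ici N))
    (by rw [range_card h]; exact tail_card h N n) (range_fin u n)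
  have hm : win u n i ∈ win u n '' Set.Ici N := this ▸ ⟨i, rfl⟩
  obtain ⟨j, hj, he⟩ := hm
  exact ⟨j, hj, he⟩

theorem unique_rs {u : ℕ → Bool} (h : IsSturmian u) {n i j i' j' : ℕ}
    (hw : win u n i = win u n j) (hne : u (i+n) ≠ u (j+n))
    (hw' : win u n i' = win u n j') (hne' : u (i'+n) ≠ u (j'+n)) :
    win u n i = win u n i' := by
  by_contra hc
  have pre : ∀ {a b}, win u (n+1) a = win u (n+1) b → win u n a = win u n b :=
    fun hh => win_eq_iff.2 fun k hk => (win_eq_iff.1 hh) k (by omega)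
  have lst : ∀ {a b}, win u (n+1) a = win u (n+1) b → u (a+n) = u (b+n) :=
    fun hh => (win_eq_iff.1 hh) n (by omega)
  have dl : ∀ a, (win u (n+1) a).dropLast = win u n a := by
    intro a; rw [win_succ]; simp
  have hsub : Set.range (win u n) ⊆
      List.dropLast '' ((Set.range (win u (n+1)) \ {win u (n+1) i}) \ {win u (n+1) i'}) := by
    rintro _ ⟨t, rfl⟩
    by_cases h1 : win u (n+1) t = win u (n+1) i
    · refine ⟨win u (n+1) j, ⟨⟨⟨j, rfl⟩, fun hh => hne (lst hh).symm⟩, fun hh => ?_⟩, ?_⟩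
      · exact hc (hw.trans (pre hh))
      · rw [dl, pre h1, hw]
    · by_cases h2 : win u (n+1) t = win u (n+1) i'
      · refine ⟨win u (n+1) j', ⟨⟨⟨j', rfl⟩, fun hh => ?_⟩, fun hh => hne' (lst hh).symm⟩, ?_⟩
        · exact hc (hw'.trans (pre hh)).symm
        · rw [dl, pre h2, hw']
      · exact ⟨win u (n+1) t, ⟨⟨⟨t, rfl⟩, h1⟩, h2⟩, dl t⟩
  have f0 := range_fin u (n+1)
  have f1 := f0.diff (t := {win u (n+1) i})
  have f2 := f1.diff (t := {win u (n+1) i'})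
  have h1 := Set.ncard_le_ncard hsub (f2.image _)
  have h2 := Set.ncard_image_le (f := List.dropLast) f2
  have h3 := Set.ncard_diff_singleton_add_one
    (show win u (n+1) i ∈ Set.range (win u (n+1)) from ⟨i, rfl⟩) f0
  have h4 := Set.ncard_diff_singleton_add_one
    (show win u (n+1) i' ∈ Set.range (win u (n+1)) \ {win u (n+1) i} from
      ⟨⟨i', rfl⟩, fun hh => hc (pre hh).symm⟩) f1
  rw [range_card h] at h1 h3
  omega

/-- `w` is the right special word of length `n` -/
def RS (u : ℕ → Bool) (n : ℕ) (w : List Bool) : Prop :=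
  ∃ i j, win u n i = w ∧ win u n j = w ∧ u (i+n) ≠ u (j+n)

theorem RS.det {u : ℕ → Bool} (h : IsSturmian u) {n : ℕ} {w : List Bool} (hw : RS u n w)
    {x y : ℕ} (hxy : win u n x = win u n y) (hx : win u n x ≠ w) : u (x+n) = u (y+n) := by
  by_contra hc
  obtain ⟨i, j, h1, h2, h3⟩ := hw
  exact hx ((unique_rs h hxy hc (h1.trans h2.symm) h3).trans h1)

/-- `d` is the first return time of `w` after position `q` -/
def Ret (u : ℕ → Bool) (n : ℕ) (w : List Bool) (q d : ℕ) : Prop :=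
  0 < d ∧ win u n q = w ∧ win u n (q+d) = w ∧ ∀ k, 0 < k → k < d → win u n (q+k) ≠ w

theorem exists_ret {u : ℕ → Bool} (h : IsSturmian u) {n : ℕ} {w : List Bool} {q : ℕ}
    (hq : win u n q = w) : ∃ d, Ret u n w q d := by
  classical
  have hex : ∃ d, 0 < d ∧ win u n (q+d) = w := by
    obtain ⟨j, hj, he⟩ := recurrent h n q (q+1)
    exact ⟨j - q, by omega, by rw [show q + (j - q) = j by omega, he, hq]⟩
  refine ⟨Nat.find hex, (Nat.find_spec hex).1, hq, (Nat.find_spec hex).2, ?_⟩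
  intro k hk hlt hh
  exact Nat.find_min hex hlt ⟨hk, hh⟩

theorem Ret.inj {u : ℕ → Bool} (h : IsSturmian u) {n : ℕ} {w : List Bool} (hw : RS u n w)
    {q d : ℕ} (hr : Ret u n w q d) {x y : ℕ} (hxy : x < y) (hy : y < d)
    (he : win u n (q+x) = win u n (q+y)) : False := by
  obtain ⟨hd, h0, h1, h2⟩ := hr
  have hx : 0 < x := by
    rcases Nat.eq_zero_or_pos x with rfl | hx
    · exact absurd (he.symm.trans h0) (h2 y hxy hy)
    · exact hx
  have key : ∀ k, y + k ≤ d → win u n (q + x + k) = win u n (q + y + k) := by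
    intro k
    induction k with
    | zero => intro _; exact he
    | succ k ih =>
      intro hk
      have i1 := ih (by omega)
      refine win_step i1 (hw.det h i1 ?_)
      have := h2 (x+k) (by omega) (by omega)
      rwa [← add_assoc] at this
  have := key (d - y) (by omega)
  rw [show q + y + (d - y) = q + d by omega, h1, show q + x + (d - y) = q + (x + (d-y)) by omega]
    at this
  exact h2 _ (by omega) (by omega) this

theorem Ret.card {u : ℕ → Bool} (h : IsSturmian u) {n : ℕ} {w : List Bool} (hw : RS u n w)
    {q d : ℕ} (hr : Ret u n w q d) :
    ((fun k => win u n (q + k)) '' Set.Iio d).ncard = d := by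
  rw [Set.ncard_image_of_injOn]
  · rw [← Finset.coe_Iio, Set.ncard_coe_finset]; simp
  · intro x hx y hy hxy
    rcases lt_trichotomy x y with hlt | heq | hlt
    · exact (hr.inj h hw hlt hy hxy).elim
    · exact heq
    · exact (hr.inj h hw hlt hx hxy.symm).elim

theorem Ret.le {u : ℕ → Bool} (h : IsSturmian u) {n : ℕ} {w : List Bool} (hw : RS u n w)
    {q d : ℕ} (hr : Ret u n w q d) : d ≤ n + 1 := by
  rw [← hr.card h hw, ← range_card h n]
  apply Set.ncard_le_ncard _ (range_fin u n)
  rintro _ ⟨k, _, rfl⟩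
  exact ⟨_, rfl⟩

theorem last_occ {u : ℕ → Bool} {n : ℕ} {w : List Bool} {q x : ℕ}
    (hq : win u n q = w) (hx : q ≤ x) :
    ∃ q', q ≤ q' ∧ q' ≤ x ∧ win u n q' = w ∧ ∀ k, q' < k → k ≤ x → win u n k ≠ w := by
  induction x, hx using Nat.le_induction with
  | base => exact ⟨q, le_rfl, le_rfl, hq, fun k h1 h2 => by omega⟩
  | succ x hx ih =>
    by_cases hc : win u n (x+1) = w
    · exact ⟨x+1, by omega, le_rfl, hc, fun k h1 h2 => by omega⟩
    · obtain ⟨q', h1, h2, h3, h4⟩ := ih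
      refine ⟨q', h1, by omega, h3, fun k h5 h6 => ?_⟩
      rcases Nat.lt_or_ge x k with h7 | h7
      · rwa [show k = x + 1 by omega]
      · exact h4 k h5 h7

/-- cycles are determined by the letter following the right special word -/
theorem Ret.follow {u : ℕ → Bool} (h : IsSturmian u) {n : ℕ} {w : List Bool} (hw : RS u n w)
    {q d q' : ℕ} (hr : Ret u n w q d) (hq' : win u n q' = w) (hl : u (q+n) = u (q'+n)) :
    ∀ k ≤ d, win u n (q+k) = win u n (q'+k) := by
  intro k
  induction k with
  | zero => intro _; exact hr.2.1.trans hq'.symm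
  | succ k ih =>
    intro hk
    have i1 := ih (by omega)
    refine win_step i1 ?_
    rcases Nat.eq_zero_or_pos k with rfl | hk0
    · exact hl
    · exact hw.det h i1 (hr.2.2.2 k hk0 (by omega))

theorem ret_sum {u : ℕ → Bool} (h : IsSturmian u) {n : ℕ} {w : List Bool} (hw : RS u n w)
    {q d q' d' : ℕ} (hr : Ret u n w q d) (hr' : Ret u n w q' d') (hne : u (q+n) ≠ u (q'+n)) :
    n + 2 ≤ d + d' := by
  have hsub : win u n '' Set.Ici q ⊆ ((fun k => win u n (q+k)) '' Set.Iio d) ∪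
      ((fun k => win u n (q'+(k+1))) '' Set.Iio (d'-1)) := by
    rintro _ ⟨x, hx, rfl⟩
    obtain ⟨p, h1, h2, h3, h4⟩ := last_occ hr.2.1 hx
    have main : ∀ {q0 d0}, Ret u n w q0 d0 → u (q0+n) = u (p+n) →
        x - p < d0 ∧ win u n (q0 + (x-p)) = win u n x := by
      intro q0 d0 hr0 hl
      have hf := hr0.follow h hw h3 hl
      have hlt : x - p < d0 := by
        by_contra hc
        exact h4 (p + d0) (by have := hr0.1; omega) (by omega) ((hf d0 le_rfl).symm.trans hr0.2.2.1)
      refine ⟨hlt, ?_⟩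
      rw [hf _ hlt.le]; congr 1; omega
    by_cases hl : u (q+n) = u (p+n)
    · obtain ⟨m1, m2⟩ := main hr hl
      exact Or.inl ⟨_, m1, m2⟩
    · have hl' : u (q'+n) = u (p+n) := by
        revert hl hne
        cases u (q+n) <;> cases u (q'+n) <;> cases u (p+n) <;> simp
      obtain ⟨m1, m2⟩ := main hr' hl'
      rcases Nat.eq_zero_or_pos (x - p) with h0 | h0
      · refine Or.inl ⟨0, hr.1, ?_⟩
        have : x = p := by omega
        subst this
        exact hr.2.1.trans h3.symm
      · refine Or.inr ⟨x - p - 1, ?_, ?_⟩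
        · simp only [Set.mem_Iio]; omega
        · simp only []
          rw [show x - p - 1 + 1 = x - p by omega, m2]
  have f1 : ((fun k => win u n (q+k)) '' Set.Iio d).Finite := (Set.finite_Iio _).image _
  have f2 : ((fun k => win u n (q'+(k+1))) '' Set.Iio (d'-1)).Finite :=
    (Set.finite_Iio _).image _
  have c0 := tail_card h q n
  have c1 := Set.ncard_le_ncard hsub (f1.union f2)
  have c2 := Set.ncard_union_le ((fun k => win u n (q+k)) '' Set.Iio d)
    ((fun k => win u n (q'+(k+1))) '' Set.Iio (d'-1))
  have c3 := hr.card h hw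
  have c4 := Set.ncard_image_le (f := fun k => win u n (q'+(k+1))) (Set.finite_Iio (d'-1))
  have c5 : (Set.Iio (d'-1)).ncard = d' - 1 := by
    rw [← Finset.coe_Iio, Set.ncard_coe_finset]; simp
  have := hr'.1
  omega

theorem const_of_step {u : ℕ → Bool} {n s : ℕ} (h : win u n s = win u n (s+1)) :
    ∀ k ≤ n, u (s+k) = u s := by
  intro k
  induction k with
  | zero => simp
  | succ k ih =>
    intro hk
    have := (win_eq_iff.1 h) k (by omega)
    rw [← ih (by omega), this]; congr 1; omega

theorem Ret.le' {u : ℕ → Bool} (h : IsSturmian u) {n : ℕ} {w : List Bool} (hw : RS u n w)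
    (hA : true ∈ w) (hB : false ∈ w) {s t : ℕ} (hs : win u n (s+1) = w)
    (ht : win u n (t+1) = w) (hst : u s ≠ u t)
    {q d : ℕ} (hr : Ret u n w q d) : d ≤ n := by
  by_contra hc
  have hd : d = n + 1 := by have := hr.le h hw; omega
  have hall : (fun k => win u n (q + k)) '' Set.Iio d = Set.range (win u n) := by
    apply Set.eq_of_subset_of_ncard_le _ _ (range_fin u n)
    · rintro _ ⟨k, _, rfl⟩
      exact ⟨_, rfl⟩
    · rw [hr.card h hw, range_card h, hd]
  have hn : 0 < n := by
    rcases Nat.eq_zero_or_pos n with rfl | hn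
    · rw [← hs] at hA; simp [win] at hA
    · exact hn
  have nb : ∀ x, win u n (x+1) = w → win u n x ≠ w := by
    intro x hx hx'
    have hcst := const_of_step (hx'.trans hx.symm)
    rw [← hx'] at hA hB
    simp only [win, List.mem_map, List.mem_range] at hA hB
    obtain ⟨a, ha, ha'⟩ := hA
    obtain ⟨b, hb, hb'⟩ := hB
    rw [hcst a ha.le] at ha'
    rw [hcst b hb.le] at hb'
    rw [ha'] at hb'
    exact absurd hb' (by simp)
  have main : ∀ x, win u n (x+1) = w → win u n x = win u n (q+n) := by
    intro x hx
    have hm : win u n x ∈ (fun k => win u n (q + k)) '' Set.Iio d := hall ▸ ⟨x, rfl⟩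
    obtain ⟨k, hk, he⟩ := hm
    simp only [Set.mem_Iio] at hk he
    have hne := nb x hx
    have hstep := win_step he.symm (hw.det h he.symm hne)
    rw [hx] at hstep
    have : ¬ (k + 1 < d) := fun hlt => hr.2.2.2 (k+1) (by omega) hlt hstep.symm
    rw [← he]; congr 2; omega
  have := (win_eq_iff.1 ((main s hs).trans (main t ht).symm)) 0 hn
  exact hst this

/-- there are no arbitrarily long runs of period `p` -/
theorem run_bounded {u : ℕ → Bool} (h : IsSturmian u) {p : ℕ} (hp : 0 < p) :
    ∃ K, ∀ i, ∃ j, i ≤ j ∧ j < i + K ∧ u j ≠ u (j+p) := by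
  classical
  by_contra hc
  push Not at hc
  have inf : ∀ N, ∃ j ≥ N, u j ≠ u (j+p) := by
    intro N
    by_contra hcc
    push Not at hcc
    exact not_ep h hp (N := N) fun n hn => (hcc n hn).symm
  obtain ⟨j, -, hj⟩ := inf 0
  obtain ⟨j', hjj, hj'⟩ := inf (j + p + 1)
  set M := j' - j with hM
  obtain ⟨i, hi⟩ := hc (M + p)
  have hex := inf i
  set e := Nat.find hex with he
  obtain ⟨he1, he2⟩ := Nat.find_spec hex
  have hmin : ∀ k, i ≤ k → k < e → u k = u (k+p) := by
    intro k h1 h2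
    have := Nat.find_min hex h2
    simpa [h1] using this
  have hge : i + (M + p) ≤ e := by
    by_contra hlt
    exact he2 (hi e he1 (by omega))
  have hrs : RS u (M+p) (win u (M+p) (e-M)) := by
    refine ⟨e - M - p, e - M, ?_, rfl, ?_⟩
    · rw [win_eq_iff]
      intro k hk
      rw [hmin _ (by omega) (by omega)]
      congr 1; omega
    · rw [show e - M - p + (M+p) = e by omega, show e - M + (M + p) = e + p by omega]
      exact he2
  set W := win u (M+p) (e-M) with hW
  have hfree : ∀ q, win u (M+p) q = W → ∀ k < M, u (q+k) = u (q+k+p) := by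
    intro q hq k hk
    have h1 := (win_eq_iff.1 hq)
    have h2 := h1 k (by omega)
    have h3 := h1 (k+p) (by omega)
    rw [h2, add_assoc, h3, ← add_assoc]
    exact hmin _ (by omega) (by omega)
  -- recurrence of the two breaks
  obtain ⟨y, hy, hyw⟩ := recurrent h (M+p+1) j (e-M)
  have hyw' := win_eq_iff.1 hyw
  have b1 : u y ≠ u (y+p) := by
    have a1 := hyw' 0 (by omega)
    have a2 := hyw' p (by omega)
    simp only [add_zero] at a1
    rw [a1, a2]; exact hj
  have b2 : u (y+M) ≠ u (y+M+p) := by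
    have a1 := hyw' M (by omega)
    have a2 := hyw' (M+p) (by omega)
    rw [a1, add_assoc, a2, ← add_assoc, show j + M = j' by omega]; exact hj'
  obtain ⟨q, q1, q2, q3, q4⟩ := last_occ (w := W) hW.symm hy
  obtain ⟨d, hd⟩ := exists_ret h q3
  have hdle := hd.le h hrs
  have l1 : q + M ≤ y := by
    by_contra hlt
    have := hfree q q3 (y - q) (by omega)
    rw [show q + (y - q) = y by omega] at this
    exact b1 this
  have l2 : y < q + d := by
    by_contra hlt
    exact q4 (q+d) (by have := hd.1; omega) (by omega) hd.2.2.1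
  have := hfree (q+d) hd.2.2.1 (y + M - (q+d)) (by omega)
  rw [show q + d + (y + M - (q+d)) = y + M by omega] at this
  exact b2 this

theorem flat_get (z : List Bool) (k : ℕ) : ∀ i < k * z.length,
    ((List.replicate k z).flatten)[i]? = z[i % z.length]? := by
  induction k with
  | zero => intro i hi; omega
  | succ k ih =>
    intro i hi
    rw [List.replicate_succ, List.flatten_cons]
    by_cases hlt : i < z.length
    · rw [List.getElem?_append_left hlt, Nat.mod_eq_of_lt hlt]
    · rw [List.getElem?_append_right (by omega), ih _ (by rw [Nat.add_mul] at hi; omega),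
        ← Nat.mod_eq_sub_mod (by omega)]

theorem occ_two {u : ℕ → Bool} {n : ℕ} {w : List Bool} {q d : ℕ} (hr : Ret u n w q d)
    (hn : 0 < n) : occCount (win u (d+n) q) w = 2 := by
  have hwl : w.length = n := by rw [← hr.2.1, win_length]
  unfold occCount
  have key : ∀ i, w <+: (win u (d+n) q).drop i ↔ (i = 0 ∨ i = d) := by
    intro i
    by_cases hi : i ≤ d
    · have : (win u (d+n) q).drop i = win u n (q+i) ++ win u (d-i) (q+i+n) := by
        rw [← win_add, show d + n = i + (n + (d-i)) by omega, win_add]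
        exact List.drop_left' (win_length _ _ _)
      rw [this, List.prefix_iff_eq_take, hwl, List.take_left' (win_length _ _ _)]
      constructor
      · intro hh
        by_contra hcc
        exact hr.2.2.2 i (by omega) (by omega) hh.symm
      · rintro (rfl | rfl)
        · exact hr.2.1.symm
        · exact hr.2.2.1.symm
    · constructor
      · intro hh
        have := hh.length_le
        rw [List.length_drop, win_length, hwl] at this
        omega
      · intro hh; omega
  have hnd : ((List.range ((win u (d+n) q).length + 1)).filter
      fun i => decide (w <+: (win u (d+n) q).drop i)).Nodup := List.nodup_range.filter _
  rw [← List.toFinset_card_of_nodup hnd]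
  have : ((List.range ((win u (d+n) q).length + 1)).filter
      fun i => decide (w <+: (win u (d+n) q).drop i)).toFinset = {0, d} := by
    ext i
    simp only [List.mem_toFinset, List.mem_filter, List.mem_range, decide_eq_true_eq, key,
      win_length, Finset.mem_insert, Finset.mem_singleton]
    omega
  rw [this, Finset.card_pair]
  have := hr.1
  omega

theorem finish {u : ℕ → Bool} (h : IsSturmian u) {n : ℕ} {b : List Bool} {q d : ℕ}
    (hr : Ret u n b q d) (h1 : n < 2 * d) (h2 : d ≤ n) :
    ∃ r : List Bool, IsReturnWord u b r ∧
      b.length < 2 * r.length ∧ r.length ≤ b.length ∧ r <+: b ∧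
      IsFactor u (r ++ r) ∧ Primitive r ∧ 2 ≤ index u r := by
  obtain ⟨hd, hq, hqd, hmin⟩ := id hr
  have hbl : b.length = n := by rw [← hq, win_length]
  have hrl : (win u d q).length = d := win_length _ _ _
  have hrb : win u d q ++ b = win u (d+n) q := by rw [win_add, hqd]
  have hper := win_eq_iff.1 (hq.trans hqd.symm)
  have hne : win u d q ≠ [] := by
    intro hh; rw [hh] at hrl; simp at hrl; omega
  have hrr : win u d q ++ win u d q = win u (d+d) q := by
    rw [win_add]; congr 1
    exact win_eq_iff.2 fun k hk => hper k (by omega)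
  have hfac : IsFactor u (win u d q ++ win u d q) := by
    rw [hrr]; exact ⟨q, factorAt_win _ _ _⟩
  have hmod : ∀ i < d + n, u (q+i) = u (q + i % d) := by
    intro i
    induction i using Nat.strong_induction_on with
    | _ i ih =>
      intro hi
      by_cases hlt : i < d
      · rw [Nat.mod_eq_of_lt hlt]
      · rw [Nat.mod_eq_sub_mod (by omega), ← ih (i-d) (by omega) (by omega),
          hper (i-d) (by omega)]
        congr 1; omega
  refine ⟨win u d q, ⟨hne, ?_, ?_, ?_⟩, by omega, by omega, ?_, hfac, ⟨hne, ?_⟩, ?_⟩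
  · rw [hrb]; exact ⟨q, factorAt_win _ _ _⟩
  · rw [hrb, add_comm, win_add, hq]; exact List.prefix_append _ _
  · rw [hrb]; exact occ_two hr (by omega)
  · rw [← hq, show n = d + (n - d) by omega, win_add]; exact List.prefix_append _ _
  · intro z k hk hz
    have hlen : d = k * z.length := by
      rw [← hrl, hz]; simp
    have hm : 0 < z.length := by
      rcases Nat.eq_zero_or_pos z.length with h0 | h0
      · rw [h0] at hlen; omega
      · exact h0
    have hmd : z.length < d := by rw [hlen]; nlinarith
    have hdvd : z.length ∣ d := ⟨k, by rw [hlen, mul_comm]⟩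
    have hget : ∀ i < d + n, some (u (q+i)) = z[i % z.length]? := by
      intro i hi
      have hi' := Nat.mod_lt i hd
      rw [hmod i hi, ← win_getElem? (n := d) hi', hz, flat_get z k _ (by rw [← hlen]; exact hi'),
        Nat.mod_mod_of_dvd _ hdvd]
    apply hmin z.length hm hmd
    rw [← hq, win_eq_iff]
    intro k hk
    have e1 := hget (z.length + k) (by omega)
    have e2 := hget k (by omega)
    rw [Nat.add_mod_left, ← e2] at e1
    rw [add_assoc]
    exact Option.some.inj e1
  · apply le_csSup
    · obtain ⟨K, hK⟩ := run_bounded h hd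
      refine ⟨((K + d : ℕ) : ℝ), ?_⟩
      rintro _ ⟨v, ⟨i, hv⟩, ⟨-, hle, hf⟩, rfl⟩
      rw [hrl] at hf hle ⊢
      have hvl : v.length ≤ K + d := by
        by_contra hcc
        obtain ⟨j, j1, j2, j3⟩ := hK i
        apply j3
        have g : ∀ k < v.length, v[k]? = some (u (i+k)) := by
          intro k hk
          rw [factorAt_iff] at hv
          conv_lhs => rw [hv]
          exact win_getElem? hk
        have g1 := g (j-i) (by omega)
        have g2 := g (j-i+d) (by omega)
        rw [hf _ (by omega)] at g1 g2
        rw [Nat.add_mod_right, g1] at g2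
        have := Option.some.inj g2
        rwa [show i + (j-i) = j by omega, show i + (j-i+d) = j + d by omega] at this
      have hd1 : (1:ℝ) ≤ d := by exact_mod_cast hd
      have : (v.length : ℝ) ≤ ((K + d : ℕ) : ℝ) := by exact_mod_cast hvl
      exact (div_le_self (by positivity) hd1).trans this
    · refine ⟨_, hfac, ⟨hne, by simp, ?_⟩, ?_⟩
      · intro i hi
        have hii : i < d + d := by simpa [hrl] using hi
        rw [hrr, hrl, win_getElem? hii, win_getElem? (Nat.mod_lt i hd), hmod i (by omega)]
      · have : (d:ℝ) ≠ 0 := by exact_mod_cast hd.ne'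
        rw [List.length_append, hrl]; push_cast; field_simp; norm_num

/-- a bispecial factor `b` of a Sturmian word containing both letters
has a return word `r` with `|b|/2 < |r| ≤ |b|` which is a prefix of `b`, with
`rr` a factor; `r` is primitive with index at least `2`. -/
theorem return_word_with_square (u : ℕ → Bool) (hst : IsSturmian u)
    (b : List Bool) (hb : IsFactor u b)
    (hA : true ∈ b) (hB : false ∈ b)
    (hls : LeftSpecial u b) (hrs : RightSpecial u b) :
    ∃ r : List Bool, IsReturnWord u b r ∧
      b.length < 2 * r.length ∧ r.length ≤ b.length ∧ r <+: b ∧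
      IsFactor u (r ++ r) ∧ Primitive r ∧ 2 ≤ index u r := by
  have key : ∀ {w : List Bool} {i}, FactorAt u w i → win u w.length i = w := fun hh => hh.symm
  obtain ⟨⟨s, hs⟩, ⟨t, ht⟩⟩ := hls
  obtain ⟨⟨q, hq⟩, ⟨q', hq'⟩⟩ := hrs
  have left : ∀ {c : Bool} {s}, FactorAt u (c :: b) s → win u b.length (s+1) = b ∧ u s = c := by
    intro c s hh
    have := key hh
    rw [List.length_cons, add_comm, win_add] at this
    simpa [win, and_comm] using this
  have right : ∀ {c : Bool} {q}, FactorAt u (b ++ [c]) q →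
      win u b.length q = b ∧ u (q + b.length) = c := by
    intro c q hh
    have := key hh
    rw [List.length_append, List.length_singleton, win_succ] at this
    have h2 := List.append_inj this (win_length _ _ _)
    simpa using h2
  obtain ⟨s1, s2⟩ := left hs
  obtain ⟨t1, t2⟩ := left ht
  obtain ⟨q1, q2⟩ := right hq
  obtain ⟨q1', q2'⟩ := right hq'
  have hne : u (q + b.length) ≠ u (q' + b.length) := by rw [q2, q2']; simp
  have hw : RS u b.length b := ⟨q, q', q1, q1', hne⟩
  have hst' : u s ≠ u t := by rw [s2, t2]; simp
  obtain ⟨d, hd⟩ := exists_ret hst q1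
  obtain ⟨d', hd'⟩ := exists_ret hst q1'
  have l1 := hd.le' hst hw hA hB s1 t1 hst'
  have l2 := hd'.le' hst hw hA hB s1 t1 hst'
  have hsum := ret_sum hst hw hd hd' hne
  rcases le_total d d' with hle | hle
  · exact finish hst hd' (by omega) l2
  · exact finish hst hd (by omega) l1


end SturmianPaper
end

section
/- Let β = [0,1,b₂,b₃,…] be irrational with β ∈ (1/2,1), let c ∈ ℕ, c ≥ 1, and let φ be the morphism A ↦ A^c B, B ↦ A. If u is a Sturmian word with slope β, then φ(u) is a Sturmian word with slope β' = (cβ + 1 − β)/(cβ + 1), whose continued fraction is β' = [0,1,c,b₂,b₃,…]. -/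
open Filter Topology

namespace SturmianPaper

variable {A : Type*} [DecidableEq A]

/-- The mechanical word coding the rotation by `-γ`. -/
noncomputable def mech (γ ρ : ℝ) : ℕ → Bool :=
  fun i => decide (γ ≤ Int.fract (ρ - i * γ))

lemma floor_step (γ x : ℝ) (h0 : 0 < γ) (h1 : γ < 1) :
    ⌊x⌋ - ⌊x - γ⌋ = if γ ≤ Int.fract x then 0 else 1 := by
  have hx := Int.floor_add_fract x
  have hf0 := Int.fract_nonneg x
  have hf1 := Int.fract_lt_one x
  split_ifs with h
  · have : ⌊x - γ⌋ = ⌊x⌋ := by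
      rw [Int.floor_eq_iff]; constructor <;> linarith
    omega
  · have : ⌊x - γ⌋ = ⌊x⌋ - 1 := by
      rw [Int.floor_eq_iff]; push_cast; push Not at h; constructor <;> linarith
    omega

lemma mech_step (γ ρ : ℝ) (h0 : 0 < γ) (h1 : γ < 1) (i : ℕ) :
    ⌊ρ - i * γ⌋ - ⌊ρ - (i + 1 : ℕ) * γ⌋ = if mech γ ρ i = true then 0 else 1 := by
  have := floor_step γ (ρ - i * γ) h0 h1
  have e : ρ - (i + 1 : ℕ) * γ = ρ - i * γ - γ := by push_cast; ring
  rw [e, this]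
  simp [mech]

lemma mech_count (γ ρ : ℝ) (h0 : 0 < γ) (h1 : γ < 1) (n : ℕ) :
    (((List.range n).map (mech γ ρ)).count true : ℤ) = n - (⌊ρ⌋ - ⌊ρ - n * γ⌋) := by
  induction n with
  | zero => simp
  | succ n ih =>
    have := mech_step γ ρ h0 h1 n
    rw [List.range_succ, List.map_append, List.count_append]
    push_cast at this ⊢
    rw [ih]
    cases h : mech γ ρ n <;> simp [h] at this ⊢ <;> linarith

lemma mech_density (γ ρ : ℝ) (h0 : 0 < γ) (h1 : γ < 1) :
    Tendsto (fun n => ((((List.range n).map (mech γ ρ)).count true : ℝ)) / (n : ℝ))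
      atTop (nhds (1 - γ)) := by
  have key : ∀ n : ℕ, |(((List.range n).map (mech γ ρ)).count true : ℝ) - n * (1 - γ)| ≤ 1 := by
    intro n
    have h := mech_count γ ρ h0 h1 n
    have h' : (((List.range n).map (mech γ ρ)).count true : ℝ)
        = n - ((⌊ρ⌋ : ℝ) - ⌊ρ - n * γ⌋) := by exact_mod_cast h
    rw [h', abs_le]
    have a1 := Int.floor_le ρ
    have a2 := Int.lt_floor_add_one ρ
    have a3 := Int.floor_le (ρ - n * γ)
    have a4 := Int.lt_floor_add_one (ρ - n * γ)
    constructor <;> linarith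
  rw [tendsto_iff_norm_sub_tendsto_zero]
  refine squeeze_zero' (g := fun n : ℕ => 1 / (n : ℝ)) (Eventually.of_forall fun n => norm_nonneg _) ?_
    tendsto_one_div_atTop_nhds_zero_nat
  filter_upwards [eventually_gt_atTop 0] with n hn
  have hn' : (0 : ℝ) < n := by exact_mod_cast hn
  rw [Real.norm_eq_abs, le_div_iff₀ hn']
  have : (((List.range n).map (mech γ ρ)).count true : ℝ) - n * (1 - γ)
    = ((((List.range n).map (mech γ ρ)).count true : ℝ) / n - (1 - γ)) * n := by
    field_simp
  have k := key n
  rw [this, abs_mul, abs_of_pos hn'] at k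
  exact k

lemma orbit_dense (γ ρ : ℝ) (hγ : Irrational γ) (a b : ℝ) (ha : 0 ≤ a) (hab : a < b) (hb : b ≤ 1) :
    ∃ i : ℕ, a < Int.fract (ρ - i * γ) ∧ Int.fract (ρ - i * γ) < b := by
  have : Fact ((0 : ℝ) < 1) := ⟨one_pos⟩
  have hd : DenseRange (fun n : ℕ => n • (γ : AddCircle (1 : ℝ))) := by
    rw [← denseRange_zsmul_iff_nsmul, AddCircle.denseRange_zsmul_coe_iff]
    simpa using hγ
  have ho : IsOpen (Set.image (fun x : ℝ => (x : AddCircle (1 : ℝ))) (Set.Ioo (ρ - b) (ρ - a))) :=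
    QuotientAddGroup.isOpenMap_coe _ isOpen_Ioo
  have hne : (Set.image (fun x : ℝ => (x : AddCircle (1 : ℝ))) (Set.Ioo (ρ - b) (ρ - a))).Nonempty :=
    (Set.nonempty_Ioo.2 (by linarith)).image _
  obtain ⟨i, s, ⟨hs1, hs2⟩, hs⟩ := hd.exists_mem_open ho hne
  refine ⟨i, ?_⟩
  have hs' : ((s : ℝ) : AddCircle (1 : ℝ)) = ((i • γ : ℝ) : AddCircle (1 : ℝ)) := by
    rw [AddCircle.coe_nsmul]; exact hs
  rw [← sub_eq_zero, ← AddCircle.coe_sub, AddCircle.coe_eq_zero_iff] at hs'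
  obtain ⟨z, hz⟩ := hs'
  simp only [zsmul_eq_mul, mul_one, nsmul_eq_mul] at hz
  have : ρ - i * γ = (ρ - s) + z := by rw [hz]; ring
  rw [this, Int.fract_add_intCast, Int.fract_eq_self.2 ⟨by linarith, by linarith⟩]
  constructor <;> linarith

lemma exists_gap (S : Finset ℝ) : ∀ M : ℝ, 0 < M → (∀ x ∈ S, 0 < x ∧ x < M) → ∀ k ≤ S.card,
    ∃ a b, 0 ≤ a ∧ a < b ∧ b ≤ M ∧ ∀ t, a < t → t < b → (S.filter (· ≤ t)).card = k := by
  induction S using Finset.induction_on_max with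
  | empty =>
    intro M hM _ k hk
    refine ⟨0, M, le_rfl, hM, le_rfl, fun t _ _ => ?_⟩
    simp at hk ⊢; omega
  | insert m S hm ih =>
    intro M hM hS k hk
    have hmS : m ∉ S := fun h => lt_irrefl _ (hm m h)
    obtain ⟨m0, mM⟩ := hS m (Finset.mem_insert_self _ _)
    rw [Finset.card_insert_of_notMem hmS] at hk
    rcases Nat.lt_or_ge S.card k with h | h
    · refine ⟨m, M, m0.le, mM, le_rfl, fun t h1 h2 => ?_⟩
      rw [Finset.filter_true_of_mem, Finset.card_insert_of_notMem hmS]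
      · omega
      · intro x hx
        rcases Finset.mem_insert.1 hx with rfl | hx
        · exact h1.le
        · exact ((hm x hx).trans h1).le
    · obtain ⟨a, b, h1, h2, h3, h4⟩ := ih m m0
        (fun x hx => ⟨(hS x (Finset.mem_insert_of_mem hx)).1, hm x hx⟩) k h
      refine ⟨a, b, h1, h2, h3.trans mM.le, fun t ht1 ht2 => ?_⟩
      rw [Finset.filter_insert, if_neg (by linarith)]
      exact h4 t ht1 ht2

lemma floor_sub_eq (t s : ℝ) (h0 : 0 ≤ t) (h1 : t < 1) :
    ⌊t - s⌋ = -⌊s⌋ - if Int.fract s ≤ t then 0 else 1 := by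
  have hx := Int.floor_add_fract s
  have hf0 := Int.fract_nonneg s
  have hf1 := Int.fract_lt_one s
  split_ifs with h
  · rw [Int.floor_eq_iff]; push_cast; constructor <;> linarith
  · rw [Int.floor_eq_iff]; push_cast; push Not at h; constructor <;> linarith

/-- Letters equal iff the threshold conditions are equal. -/
lemma mech_word_iff (γ ρ : ℝ) (h0 : 0 < γ) (h1 : γ < 1) (n i i' : ℕ) :
    (∀ j < n, mech γ ρ (i + j) = mech γ ρ (i' + j)) ↔
    (∀ j ≤ n, (Int.fract (j * γ) ≤ Int.fract (ρ - i * γ) ↔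
      Int.fract (j * γ) ≤ Int.fract (ρ - i' * γ))) := by
  have hF : ∀ i j : ℕ, ⌊ρ - (i + j : ℕ) * γ⌋ = ⌊ρ - i * γ⌋ + (-⌊j * γ⌋ -
      if Int.fract (j * γ) ≤ Int.fract (ρ - i * γ) then 0 else 1) := by
    intro i j
    rw [← floor_sub_eq _ _ (Int.fract_nonneg _) (Int.fract_lt_one _), ← Int.floor_intCast_add]
    congr 1
    have := Int.floor_add_fract (ρ - i * γ)
    push_cast
    linarith
  constructor
  · intro h j hj
    have : ⌊ρ - (i + j : ℕ) * γ⌋ - ⌊ρ - i * γ⌋ = ⌊ρ - (i' + j : ℕ) * γ⌋ - ⌊ρ - i' * γ⌋ := by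
      induction j with
      | zero => simp
      | succ j ih =>
        have e1 := mech_step γ ρ h0 h1 (i + j)
        have e2 := mech_step γ ρ h0 h1 (i' + j)
        rw [h j (by omega)] at e1
        have := ih (by omega)
        rw [← add_assoc, ← add_assoc]
        omega
    rw [hF, hF] at this
    by_cases c1 : Int.fract (j * γ) ≤ Int.fract (ρ - i * γ) <;>
    by_cases c2 : Int.fract (j * γ) ≤ Int.fract (ρ - i' * γ) <;>
    simp only [c1, c2, if_true, if_false] at this ⊢ <;> omega
  · intro h j hj
    have e1 := mech_step γ ρ h0 h1 (i + j)
    have e2 := mech_step γ ρ h0 h1 (i' + j)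
    rw [add_assoc, hF, hF] at e1 e2
    simp only [h j hj.le, h (j + 1) hj] at e1
    have : (if mech γ ρ (i + j) = true then (0 : ℤ) else 1) =
      if mech γ ρ (i' + j) = true then 0 else 1 := by
      rw [← e1, ← e2]; ring
    cases c1 : mech γ ρ (i + j) <;> cases c2 : mech γ ρ (i' + j) <;> simp [c1, c2] at this ⊢

lemma fract_inj (γ : ℝ) (hγ : Irrational γ) (i j : ℕ) (h : Int.fract (i * γ) = Int.fract (j * γ)) :
    i = j := by
  by_contra hne
  obtain ⟨z, hz⟩ := Int.fract_eq_fract.1 h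
  have : ((i : ℤ) - j : ℤ) ≠ 0 := by omega
  have h2 := (hγ.intCast_mul this).ne_int z
  apply h2
  push_cast
  linarith

lemma mech_sturmian (γ ρ : ℝ) (hγ : Irrational γ) (h0 : 0 < γ) (h1 : γ < 1) :
    IsSturmian (mech γ ρ) := by
  classical
  intro n
  set S : Finset ℝ := (Finset.Icc 1 n).image (fun j : ℕ => Int.fract (j * γ)) with hS
  have hcard : S.card = n := by
    rw [hS, Finset.card_image_of_injective _ (fun i j h => fract_inj γ hγ i j h)]
    simp
  have hS01 : ∀ x ∈ S, 0 < x ∧ x < 1 := by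
    intro x hx
    obtain ⟨j, hj, rfl⟩ := Finset.mem_image.1 hx
    refine ⟨lt_of_le_of_ne (Int.fract_nonneg _) fun h => ?_, Int.fract_lt_one _⟩
    have := fract_inj γ hγ 0 j (by simpa using h)
    have := (Finset.mem_Icc.1 hj).1
    omega
  let t : ℕ → ℝ := fun i => Int.fract (ρ - i * γ)
  have hex : ∀ k : ℕ, ∃ i : ℕ, k ≤ n → (S.filter (· ≤ t i)).card = k := by
    intro k
    by_cases hk : k ≤ n
    · obtain ⟨a, b, ha, hab, hb, h⟩ := exists_gap S 1 one_pos hS01 k (by omega)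
      obtain ⟨i, hi1, hi2⟩ := orbit_dense γ ρ hγ a b ha hab hb
      exact ⟨i, fun _ => h _ hi1 hi2⟩
    · exact ⟨0, fun h => absurd h hk⟩
  choose I hI using hex
  let W : ℕ → List Bool := fun i => (List.range n).map fun j => mech γ ρ (i + j)
  have hW : ∀ i i', W i = W i' ↔ (S.filter (· ≤ t i)).card = (S.filter (· ≤ t i')).card := by
    intro i i'
    have e1 : W i = W i' ↔ ∀ j < n, mech γ ρ (i + j) = mech γ ρ (i' + j) := by
      simp [W]
    rw [e1, mech_word_iff γ ρ h0 h1]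
    constructor
    · intro h
      congr 1
      apply Finset.filter_congr
      intro x hx
      obtain ⟨j, hj, rfl⟩ := Finset.mem_image.1 hx
      exact h j (Finset.mem_Icc.1 hj).2
    · intro h
      have hfe : S.filter (· ≤ t i) = S.filter (· ≤ t i') := by
        rcases le_total (t i) (t i') with hle | hle
        · exact Finset.eq_of_subset_of_card_le
            (Finset.monotone_filter_right _ fun x _ hx => le_trans hx hle) h.ge
        · exact (Finset.eq_of_subset_of_card_le
            (Finset.monotone_filter_right _ fun x _ hx => le_trans hx hle) h.le).symm
      intro j hj
      rcases Nat.eq_zero_or_pos j with rfl | hj0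
      · simp
      · have hm : Int.fract (j * γ) ∈ S :=
          Finset.mem_image.2 ⟨j, Finset.mem_Icc.2 ⟨hj0, hj⟩, rfl⟩
        have := congrArg (fun s => Int.fract (j * γ) ∈ s) hfe
        simpa [hm, t] using this
  have hset : {w : List Bool | IsFactor (mech γ ρ) w ∧ w.length = n} =
      Set.image (fun k => W (I k)) (Finset.range (n + 1) : Set ℕ) := by
    ext w
    constructor
    · rintro ⟨⟨i, hi⟩, hn⟩
      unfold FactorAt at hi
      rw [hn] at hi
      have hle : (S.filter (· ≤ t i)).card ≤ n := hcard ▸ Finset.card_filter_le _ _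
      refine ⟨(S.filter (· ≤ t i)).card, by simp; omega, ?_⟩
      rw [hi]
      exact (hW _ _).2 (hI _ hle)
    · rintro ⟨k, -, rfl⟩
      exact ⟨⟨I k, by simp [FactorAt, W]⟩, by simp [W]⟩
  unfold complexity
  rw [hset, Set.ncard_image_of_injOn, Set.ncard_coe_finset, Finset.card_range]
  intro k hk k' hk' h
  simp at hk hk'
  have := (hW _ _).1 h
  rwa [hI k (by omega), hI k' (by omega)] at this

lemma sturm_state (β x₀ : ℝ) (k : ℕ) (hβ : 0 < β) (hβ1 : β < 1) :
    Int.fract (x₀ + (k + 1 : ℕ) * (1 - β)) =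
      if Int.fract (x₀ + k * (1 - β)) < β then Int.fract (x₀ + k * (1 - β)) + 1 - β
      else Int.fract (x₀ + k * (1 - β)) - β := by
  set y := x₀ + k * (1 - β) with hy
  have e : x₀ + (k + 1 : ℕ) * (1 - β) = y + (1 - β) := by push_cast; rw [hy]; ring
  rw [e]
  have hx := Int.floor_add_fract y
  have hf0 := Int.fract_nonneg y
  have hf1 := Int.fract_lt_one y
  split_ifs with h
  · rw [Int.fract_eq_iff]
    exact ⟨by linarith, by linarith, ⌊y⌋, by linarith⟩
  · rw [Int.fract_eq_iff]
    exact ⟨by linarith, by linarith, ⌊y⌋ + 1, by push_cast; linarith⟩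

lemma mech_val (γ ρ r : ℝ) (i : ℕ) (z : ℤ) (h : ρ - i * γ = r + z) (hr0 : 0 ≤ r) (hr1 : r < 1) :
    mech γ ρ i = decide (γ ≤ r) := by
  unfold mech
  rw [h, Int.fract_add_intCast, Int.fract_eq_self.2 ⟨hr0, hr1⟩]

lemma phi_prefix (β x₀ : ℝ) (hβ : 0 < β) (hβ1 : β < 1) (hx0 : 0 ≤ x₀) (hx1 : x₀ < 1)
    (c : ℕ) (k : ℕ) :
    ∃ l : ℕ, k ≤ l ∧ (∃ z : ℤ, (x₀ - 1) / (c * β + 1) - l * (β / (c * β + 1)) =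
        (Int.fract (x₀ + k * (1 - β)) - 1) / (c * β + 1) + z) ∧
      phiW c ((List.range k).map (sturmianWord β x₀)) =
        (List.range l).map (mech (β / (c * β + 1)) ((x₀ - 1) / (c * β + 1))) := by
  have hL : 0 < c * β + 1 := by positivity
  induction k with
  | zero =>
    refine ⟨0, le_rfl, ⟨0, ?_⟩, by simp [phiW]⟩
    simp [Int.fract_eq_self.2 ⟨hx0, hx1⟩]
  | succ k ih =>
    obtain ⟨l, hkl, ⟨z, hz⟩, hw⟩ := ih
    have hst := sturm_state β x₀ k hβ hβ1
    set y := Int.fract (x₀ + k * (1 - β)) with hy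
    have hf0 : 0 ≤ y := Int.fract_nonneg _
    have hf1 : y < 1 := Int.fract_lt_one _
    have happ : phiW c ((List.range (k + 1)).map (sturmianWord β x₀)) =
        phiW c ((List.range k).map (sturmianWord β x₀)) ++
          (if y < β then List.replicate c true ++ [false] else [true]) := by
      simp [phiW, List.range_succ, sturmianWord, hy]
    rw [happ, hw]
    have hz' : ∀ j : ℕ, (x₀ - 1) / (c * β + 1) - (l + j : ℕ) * (β / (c * β + 1)) =
        (y + (c - j) * β) / (c * β + 1) + (z - 1 : ℤ) := by
      intro j
      have : (x₀ - 1) / (c * β + 1) - (l + j : ℕ) * (β / (c * β + 1)) =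
        (x₀ - 1) / (c * β + 1) - l * (β / (c * β + 1)) - j * (β / (c * β + 1)) := by
        push_cast; ring
      rw [this, hz]
      push_cast
      field_simp
      ring
    by_cases h : y < β
    · rw [if_pos h] at hst ⊢
      refine ⟨l + (c + 1), by omega, ⟨z - 1, ?_⟩, ?_⟩
      · rw [hz', hst]
        push_cast
        field_simp
        ring
      · rw [List.range_add, List.map_append]
        congr 1
        rw [List.range_succ, List.map_append, List.map_append]
        congr 1
        · symm
          rw [List.eq_replicate_iff]
          refine ⟨by simp, ?_⟩
          intro b hb
          simp only [List.mem_map, List.mem_range] at hb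
          obtain ⟨_, ⟨j, hj, rfl⟩, rfl⟩ := hb
          have hj' : (j : ℝ) + 1 ≤ c := by exact_mod_cast hj
          have hj0 : (0 : ℝ) ≤ j := by positivity
          rw [mech_val _ _ _ _ _ (hz' j)]
          · rw [decide_eq_true_iff]
            gcongr
            nlinarith
          · apply div_nonneg _ hL.le
            nlinarith
          · rw [div_lt_one hL]
            nlinarith
        · simp only [List.map_cons, List.map_nil]
          rw [mech_val _ _ _ _ _ (hz' c)]
          · congr 1
            symm
            rw [decide_eq_false_iff_not, not_le]
            gcongr
            linarith
          · apply div_nonneg _ hL.le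
            linarith
          · rw [div_lt_one hL]
            nlinarith
    · rw [if_neg h] at hst ⊢
      refine ⟨l + 1, by omega, ⟨z, ?_⟩, ?_⟩
      · rw [hz', hst]
        push_cast
        field_simp
        ring
      · rw [List.range_succ, List.map_append]
        congr 1
        simp only [List.map_cons, List.map_nil]
        push Not at h
        have hc0 : 0 ≤ c * β := by positivity
        have := hz' 0
        rw [add_zero] at this
        rw [mech_val _ _ _ _ _ this]
        · congr 1
          symm
          rw [decide_eq_true_iff]
          gcongr
          simp; linarith
        · apply div_nonneg _ hL.le
          simp; linarith
        · rw [div_lt_one hL]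
          simp; linarith

lemma phiInf_eq (β x₀ : ℝ) (hβ : 0 < β) (hβ1 : β < 1) (hx0 : 0 ≤ x₀) (hx1 : x₀ < 1)
    (c : ℕ) :
    phiInf c (sturmianWord β x₀) = mech (β / (c * β + 1)) ((x₀ - 1) / (c * β + 1)) := by
  funext n
  obtain ⟨l, hl, -, hw⟩ := phi_prefix β x₀ hβ hβ1 hx0 hx1 c (n + 1)
  unfold phiInf
  rw [hw]
  have : n < l := by omega
  simp [List.getD, this]

lemma gamma_irr (β : ℝ) (hirr : Irrational β) (hβ : 0 < β) (c : ℕ) :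
    Irrational (β / (c * β + 1)) := by
  have h : β / (c * β + 1) = (β⁻¹ + c)⁻¹ := by
    field_simp
    ring
  rw [h]
  exact (hirr.inv.add_natCast c).inv

lemma cf_part (β : ℝ) (hβ : 0 < β) (c : ℕ)
    (b p q : ℕ → ℕ)
    (hq0 : q 0 = 1) (hq1 : q 1 = 1)
    (hqrec : ∀ N, q (N + 2) = b (N + 2) * q (N + 1) + q N)
    (hp0 : p 0 = 0) (hp1 : p 1 = 1)
    (hprec : ∀ N, p (N + 2) = b (N + 2) * p (N + 1) + p N)
    (hcf : Tendsto (fun N => (p N : ℝ) / (q N : ℝ)) atTop (nhds β))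
    (a' : ℕ → ℕ) (ha2 : a' 2 = c) (ha : ∀ n, 2 ≤ n → a' (n + 1) = b n) :
    ∃ p' q' : ℕ → ℕ, q' 0 = 1 ∧ q' 1 = 1 ∧ p' 0 = 0 ∧ p' 1 = 1 ∧
      (∀ N, q' (N + 2) = a' (N + 2) * q' (N + 1) + q' N) ∧
      (∀ N, p' (N + 2) = a' (N + 2) * p' (N + 1) + p' N) ∧
      Tendsto (fun N => (p' N : ℝ) / (q' N : ℝ)) atTop
        (nhds ((c * β + 1 - β) / (c * β + 1))) := by
  have hpq : ∀ N, (p N ≤ q N ∧ 0 < q N) ∧ (p (N + 1) ≤ q (N + 1) ∧ 0 < q (N + 1)) := by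
    intro N
    induction N with
    | zero => simp [hq0, hq1, hp0, hp1]
    | succ N ih =>
      refine ⟨ih.2, ?_, ?_⟩
      · rw [hqrec, hprec]
        exact add_le_add (Nat.mul_le_mul_left _ ih.2.1) ih.1.1
      · rw [hqrec]
        have := ih.1.2
        positivity
  have hsub : ∀ N, ∃ d, q N = p N + d := fun N => Nat.exists_eq_add_of_le (hpq N).1.1
  choose d hd using hsub
  have hdrec : ∀ N, d (N + 2) = b (N + 2) * d (N + 1) + d N := by
    intro N
    have h1 := hqrec N
    rw [hd, hd, hd N, hprec] at h1
    linarith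
  have hd0 : d 0 = 1 := by have := hd 0; omega
  have hd1 : d 1 = 0 := by have := hd 1; omega
  refine ⟨fun N => match N with | 0 => 0 | N + 1 => c * p N + d N,
    fun N => match N with | 0 => 1 | N + 1 => c * p N + q N, rfl, by simp [hp0, hq0], rfl,
    by simp [hp0, hd0], ?_, ?_, ?_⟩
  · intro N
    match N with
    | 0 => simp [hp0, hq0, hp1, hq1, ha2]
    | N + 1 =>
      simp only [ha (N + 2) (by omega), hqrec, hprec]; ring
  · intro N
    match N with
    | 0 => simp [hp0, hd0, hp1, hd1, ha2]
    | N + 1 =>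
      simp only [ha (N + 2) (by omega), hdrec, hprec]; ring
  · rw [← tendsto_add_atTop_iff_nat 1]
    have hL : c * β + 1 ≠ 0 := by positivity
    have := (((hcf.const_mul (c : ℝ)).add_const 1).sub hcf).div
      ((hcf.const_mul (c : ℝ)).add_const 1) hL
    refine this.congr fun N => ?_
    have hq : (0 : ℝ) < q N := by exact_mod_cast (hpq N).1.2
    have hdq : (d N : ℝ) = q N - p N := by
      have : (q N : ℝ) = p N + d N := by exact_mod_cast hd N
      linarith
    simp only [Pi.div_apply, Nat.cast_add, Nat.cast_mul, hdq]
    have hh : (0 : ℝ) < c * p N + q N := by positivity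
    field_simp
    ring

/-- the morphism `φ : A ↦ AᶜB, B ↦ A` maps a Sturmian word of slope
`β = [0,1,b₂,b₃,…] ∈ (1/2,1)` to a Sturmian word whose slope (density of `A`) is
`β' = (cβ + 1 − β)/(cβ + 1)`, with continued fraction `β' = [0,1,c,b₂,b₃,…]`. -/
theorem morphism_image_sturmian (β x₀ : ℝ) (hirr : Irrational β)
    (hβ : 1/2 < β) (hβ1 : β < 1) (hx0 : 0 ≤ x₀) (hx1 : x₀ < 1)
    (c : ℕ) (hc : 1 ≤ c)
    (b p q : ℕ → ℕ) (hb1 : b 1 = 1) (hbpos : ∀ n, 1 ≤ n → 1 ≤ b n)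
    (hq0 : q 0 = 1) (hq1 : q 1 = 1)
    (hqrec : ∀ N, q (N + 2) = b (N + 2) * q (N + 1) + q N)
    (hp0 : p 0 = 0) (hp1 : p 1 = 1)
    (hprec : ∀ N, p (N + 2) = b (N + 2) * p (N + 1) + p N)
    (hcf : Tendsto (fun N => (p N : ℝ) / (q N : ℝ)) atTop (nhds β)) :
    IsSturmian (phiInf c (sturmianWord β x₀)) ∧
    Tendsto (fun n => ((((List.range n).map (phiInf c (sturmianWord β x₀))).count true : ℝ)) / (n : ℝ))
      atTop (nhds ((c * β + 1 - β) / (c * β + 1))) ∧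
    (∀ a' : ℕ → ℕ, a' 1 = 1 → a' 2 = c → (∀ n, 2 ≤ n → a' (n + 1) = b n) →
      (∃ p' q' : ℕ → ℕ, q' 0 = 1 ∧ q' 1 = 1 ∧ p' 0 = 0 ∧ p' 1 = 1 ∧
      (∀ N, q' (N + 2) = a' (N + 2) * q' (N + 1) + q' N) ∧
      (∀ N, p' (N + 2) = a' (N + 2) * p' (N + 1) + p' N) ∧
      Tendsto (fun N => (p' N : ℝ) / (q' N : ℝ)) atTop
        (nhds ((c * β + 1 - β) / (c * β + 1))))) := by
  have hβ0 : 0 < β := by linarith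
  have hL : 0 < c * β + 1 := by positivity
  have hγ0 : 0 < β / (c * β + 1) := by positivity
  have hγ1 : β / (c * β + 1) < 1 := by
    rw [div_lt_one hL]
    have : 0 ≤ c * β := by positivity
    linarith
  rw [phiInf_eq β x₀ hβ0 hβ1 hx0 hx1 c]
  refine ⟨mech_sturmian _ _ (gamma_irr β hirr hβ0 c) hγ0 hγ1, ?_, ?_⟩
  · have e : (c * β + 1 - β) / (c * β + 1) = 1 - β / (c * β + 1) := by
      field_simp
    rw [e]
    exact mech_density _ _ hγ0 hγ1
  · intro a' _ ha2 ha
    exact cf_part β hβ0 c b p q hq0 hq1 hqrec hp0 hp1 hprec hcf a' ha2 ha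

end SturmianPaper
end

section
/- The index of a Sturmian word u with slope α = [0,1,a₂,a₃,…] equals sup_{N≥1} (2 + a_{N+1} + (q_{N−1} − 2)/q_N), where q_N are the convergent denominators of α. -/
open Filter Topology

namespace SturmianPaper

variable {A : Type*} [DecidableEq A]

/-- Every half-open interval of length `η = |Q β - P|` is hit by sufficiently many consecutive
points of the orbit of a rotation. -/
theorem hit_aux (β y s η η' : ℝ) (Q Q' : ℕ) (P P' : ℤ) (hQ' : 0 < Q')
    (hη' : 0 < η') (hle : η' ≤ η)
    (h : (Q * β - P = η ∧ Q' * β - P' = -η') ∨ (Q * β - P = -η ∧ Q' * β - P' = η')) :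
    ∃ n : ℕ, n < Q + Q' ∧ ∃ k : ℤ, s ≤ y + n * β - k ∧ y + n * β - k < s + η := by
  by_contra hcon
  push Not at hcon
  rcases h with ⟨h1, h2⟩ | ⟨h1, h2⟩
  · have key : ∀ j : ℕ, ∃ n : ℕ, n < Q + Q' ∧ ∃ k : ℤ,
        (s - 1) + j * η' ≤ y + n * β - k ∧ y + n * β - k < s := by
      intro j
      induction j with
      | zero =>
        refine ⟨0, by omega, ⌈y - s⌉ + 1 - 1 + (if (⌈y - s⌉ : ℝ) = y - s then 1 else 0), ?_, ?_⟩
        · have := Int.ceil_lt_add_one (y - s)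
          split_ifs with hh <;> push_cast <;> linarith
        · have := Int.le_ceil (y - s)
          split_ifs with hh
          · push_cast; linarith
          · have := lt_of_le_of_ne this (Ne.symm hh)
            push_cast; linarith
      | succ j ih =>
        obtain ⟨n, hn, k, hk1, hk2⟩ := ih
        by_cases hc : n < Q'
        · have := hcon (n + Q) (by omega) (k + P)
          push_cast at this ⊢
          refine ⟨n + Q, by omega, k + P, ?_, ?_⟩
          · push_cast; linarith
          · by_contra h3
            push_cast at h3
            have := this (by linarith)
            linarith
        · obtain ⟨n', rfl⟩ := Nat.exists_eq_add_of_le (not_lt.mp hc)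
          have := hcon n' (by omega) (k - P')
          push_cast at this hk1 hk2 ⊢
          refine ⟨n', by omega, k - P', ?_, ?_⟩
          · push_cast; linarith
          · by_contra h3
            push_cast at h3
            have := this (by linarith)
            linarith
    obtain ⟨j, hj⟩ := exists_nat_gt (1 / η')
    obtain ⟨n, -, k, h3, h4⟩ := key j
    rw [div_lt_iff₀ hη'] at hj
    linarith
  · have key : ∀ j : ℕ, ∃ n : ℕ, n < Q + Q' ∧ ∃ k : ℤ,
        s + η ≤ y + n * β - k ∧ y + n * β - k ≤ s + η + 1 - j * η' := by
      intro j
      induction j with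
      | zero =>
        refine ⟨0, by omega, ⌊y - s - η⌋, ?_, ?_⟩
        · have := Int.floor_le (y - s - η)
          push_cast; linarith
        · have := Int.lt_floor_add_one (y - s - η)
          push_cast; linarith
      | succ j ih =>
        obtain ⟨n, hn, k, hk1, hk2⟩ := ih
        by_cases hc : n < Q'
        · have := hcon (n + Q) (by omega) (k + P)
          push_cast at this ⊢
          refine ⟨n + Q, by omega, k + P, ?_, ?_⟩
          · push_cast
            have := this (by linarith)
            linarith
          · push_cast; linarith
        · obtain ⟨n', rfl⟩ := Nat.exists_eq_add_of_le (not_lt.mp hc)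
          have := hcon n' (by omega) (k - P')
          push_cast at this hk1 hk2 ⊢
          refine ⟨n', by omega, k - P', ?_, ?_⟩
          · push_cast
            have := this (by linarith)
            linarith
          · push_cast; linarith
    obtain ⟨j, hj⟩ := exists_nat_gt (1 / η')
    obtain ⟨n, -, k, h3, h4⟩ := key j
    rw [div_lt_iff₀ hη'] at hj
    linarith

theorem lattice_aux (Q Q' P P' m k : ℤ) (hdet : P * Q' - P' * Q = 1 ∨ P * Q' - P' * Q = -1) :
    ∃ x y : ℤ, m = x * Q + y * Q' ∧ k = x * P + y * P' := by
  rcases hdet with h | h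
  · refine ⟨k * Q' - m * P', m * P - k * Q, ?_, ?_⟩
    · linear_combination (-m) * h
    · linear_combination (-k) * h
  · refine ⟨-(k * Q' - m * P'), -(m * P - k * Q), ?_, ?_⟩
    · linear_combination m * h
    · linear_combination k * h

/-- Best approximation. -/
theorem best_aux (β η η' : ℝ) (Q Q' m : ℕ) (P P' k : ℤ)
    (hdet : P * Q' - P' * Q = 1 ∨ P * Q' - P' * Q = -1)
    (hη' : 0 < η') (hle : η' ≤ η)
    (h : (Q * β - P = η ∧ Q' * β - P' = -η') ∨ (Q * β - P = -η ∧ Q' * β - P' = η'))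
    (hm : 0 < m) (hmQ : m < Q') : η ≤ |m * β - k| := by
  obtain ⟨x, y, hx, hy⟩ := lattice_aux Q Q' P P' m k hdet
  have hv : (m : ℝ) * β - k = x * (Q * β - P) + y * (Q' * β - P') := by
    have h1 : (m : ℝ) = x * Q + y * Q' := by exact_mod_cast hx
    have h2 : (k : ℝ) = x * P + y * P' := by exact_mod_cast hy
    rw [h1, h2]; ring
  have hη : 0 < η := lt_of_lt_of_le hη' hle
  have hcases : (1 ≤ x ∧ y ≤ 0) ∨ (x ≤ -1 ∧ 1 ≤ y) := by
    rcases le_or_gt 1 x with hx1 | hx1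
    · left
      refine ⟨hx1, ?_⟩
      by_contra hy1
      have : (1 : ℤ) ≤ y := by omega
      nlinarith
    · right
      have hy1 : 1 ≤ y := by
        by_contra hy1
        have : y ≤ 0 := by omega
        have : x ≤ 0 := by omega
        nlinarith
      refine ⟨?_, hy1⟩
      by_contra hx2
      have : x = 0 := by omega
      subst this
      nlinarith
  rw [hv]
  rcases hcases with ⟨h1, h2⟩ | ⟨h1, h2⟩
  · have h1' : (1 : ℝ) ≤ x := by exact_mod_cast h1
    have h2' : (y : ℝ) ≤ 0 := by exact_mod_cast h2
    rcases h with ⟨h3, h4⟩ | ⟨h3, h4⟩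
    · rw [h3, h4]
      refine le_trans ?_ (le_abs_self _)
      nlinarith
    · rw [h3, h4]
      refine le_trans ?_ (neg_le_abs _)
      nlinarith
  · have h1' : (x : ℝ) ≤ -1 := by exact_mod_cast h1
    have h2' : (1 : ℝ) ≤ y := by exact_mod_cast h2
    rcases h with ⟨h3, h4⟩ | ⟨h3, h4⟩
    · rw [h3, h4]
      refine le_trans ?_ (neg_le_abs _)
      nlinarith
    · rw [h3, h4]
      refine le_trans ?_ (le_abs_self _)
      nlinarith

/-- The large gap among consecutive orbit points. -/
theorem gap_aux (β η η' : ℝ) (Q Q' m : ℕ) (P P' k : ℤ)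
    (hdet : P * Q' - P' * Q = 1 ∨ P * Q' - P' * Q = -1)
    (hη' : 0 < η') (hη : 0 < η)
    (h : Q * β - P = η ∧ Q' * β - P' = -η')
    (hm : 0 < m) (hmQ : m < Q + Q') : ¬ (-η' < m * β - k ∧ m * β - k < η) := by
  obtain ⟨x, y, hx, hy⟩ := lattice_aux Q Q' P P' m k hdet
  have hv : (m : ℝ) * β - k = x * (Q * β - P) + y * (Q' * β - P') := by
    have h1 : (m : ℝ) = x * Q + y * Q' := by exact_mod_cast hx
    have h2 : (k : ℝ) = x * P + y * P' := by exact_mod_cast hy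
    rw [h1, h2]; ring
  have hcases : (1 ≤ x ∧ y ≤ 0) ∨ (x ≤ 0 ∧ 1 ≤ y) := by
    rcases le_or_gt 1 x with hx1 | hx1
    · left
      refine ⟨hx1, ?_⟩
      by_contra hy1
      have : (1 : ℤ) ≤ y := by omega
      nlinarith
    · right
      refine ⟨by omega, ?_⟩
      by_contra hy1
      have : y ≤ 0 := by omega
      have : x ≤ 0 := by omega
      nlinarith
  rw [hv, h.1, h.2]
  rintro ⟨h5, h6⟩
  rcases hcases with ⟨h1, h2⟩ | ⟨h1, h2⟩
  · have h1' : (1 : ℝ) ≤ x := by exact_mod_cast h1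
    have h2' : (y : ℝ) ≤ 0 := by exact_mod_cast h2
    nlinarith
  · have h1' : (x : ℝ) ≤ 0 := by exact_mod_cast h1
    have h2' : (1 : ℝ) ≤ y := by exact_mod_cast h2
    nlinarith

theorem word_true_iff (α x₀ : ℝ) (hα1 : α < 1) (n : ℕ) :
    sturmianWord α x₀ n = true ↔ ⌊x₀ + (n + 1 : ℕ) * (1 - α)⌋ = ⌊x₀ + n * (1 - α)⌋ := by
  unfold sturmianWord
  rw [decide_eq_true_iff, Int.floor_eq_iff]
  have h1 := Int.floor_add_fract (x₀ + n * (1 - α))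
  have h2 := Int.fract_nonneg (x₀ + n * (1 - α))
  push_cast
  constructor
  · intro h; constructor <;> linarith
  · rintro ⟨h3, h4⟩; linarith

theorem floor_step_s14 (α x₀ : ℝ) (hα0 : 0 < α) (hα1 : α < 1) (n : ℕ) :
    ⌊x₀ + (n + 1 : ℕ) * (1 - α)⌋ = ⌊x₀ + n * (1 - α)⌋ ∨
    ⌊x₀ + (n + 1 : ℕ) * (1 - α)⌋ = ⌊x₀ + n * (1 - α)⌋ + 1 := by
  have h1 : ⌊x₀ + n * (1 - α)⌋ ≤ ⌊x₀ + (n + 1 : ℕ) * (1 - α)⌋ := by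
    apply Int.floor_le_floor; push_cast; linarith
  have h2 : ⌊x₀ + (n + 1 : ℕ) * (1 - α)⌋ ≤ ⌊x₀ + n * (1 - α)⌋ + 1 := by
    rw [← Int.floor_add_one]
    apply Int.floor_le_floor; push_cast; linarith
  omega

theorem word_eq_iff (α x₀ : ℝ) (hα0 : 0 < α) (hα1 : α < 1) (n m : ℕ) :
    sturmianWord α x₀ (n + m) = sturmianWord α x₀ n ↔
      ⌊x₀ + (n + 1 + m : ℕ) * (1 - α)⌋ - ⌊x₀ + (n + 1 : ℕ) * (1 - α)⌋ =
      ⌊x₀ + (n + m : ℕ) * (1 - α)⌋ - ⌊x₀ + n * (1 - α)⌋ := by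
  have h1 := word_true_iff α x₀ hα1 n
  have h2 := word_true_iff α x₀ hα1 (n + m)
  have h3 := floor_step_s14 α x₀ hα0 hα1 n
  have h4 := floor_step_s14 α x₀ hα0 hα1 (n + m)
  rw [show n + 1 + m = n + m + 1 by ring]
  rw [Bool.eq_iff_iff, h1, h2]
  omega

theorem run_upper (α x₀ η η' : ℝ) (hα0 : 0 < α) (hα1 : α < 1) (Q Q' m : ℕ) (P P' : ℤ)
    (hdet : P * Q' - P' * Q = 1 ∨ P * Q' - P' * Q = -1)
    (hη' : 0 < η') (hle : η' ≤ η)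
    (h : (Q * (1 - α) - P = η ∧ Q' * (1 - α) - P' = -η') ∨
      (Q * (1 - α) - P = -η ∧ Q' * (1 - α) - P' = η'))
    (hm : 0 < m) (hmQ : m < Q') (i K : ℕ)
    (hK : ∀ j < K, sturmianWord α x₀ (i + j + m) = sturmianWord α x₀ (i + j)) :
    K + 2 ≤ Q + Q' := by
  by_contra hcon
  have hη : 0 < η := lt_of_lt_of_le hη' hle
  have hc : ∀ j ≤ K, ⌊x₀ + (i + j + m : ℕ) * (1 - α)⌋ - ⌊x₀ + (i + j : ℕ) * (1 - α)⌋ =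
      ⌊x₀ + (i + m : ℕ) * (1 - α)⌋ - ⌊x₀ + (i : ℕ) * (1 - α)⌋ := by
    intro j
    induction j with
    | zero => intro _; rfl
    | succ j ih =>
      intro hj
      rw [← ih (by omega)]
      exact (word_eq_iff α x₀ hα0 hα1 (i + j) m).1 (hK j (by omega))
  obtain ⟨G, hG⟩ : ∃ G, G = ⌊x₀ + (i + m : ℕ) * (1 - α)⌋ - ⌊x₀ + (i : ℕ) * (1 - α)⌋ := ⟨_, rfl⟩
  rw [← hG] at hc
  have hf : ∀ j ≤ K, 0 ≤ Int.fract (x₀ + (i + j : ℕ) * (1 - α)) + (m * (1 - α) - G) ∧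
      Int.fract (x₀ + (i + j : ℕ) * (1 - α)) + (m * (1 - α) - G) < 1 := by
    intro j hj
    have h1 := hc j hj
    have h2 := Int.floor_add_fract (x₀ + (i + j : ℕ) * (1 - α))
    have h3 := Int.floor_le (x₀ + (i + j + m : ℕ) * (1 - α))
    have h4 := Int.lt_floor_add_one (x₀ + (i + j + m : ℕ) * (1 - α))
    have h5 : ((⌊x₀ + (i + j + m : ℕ) * (1 - α)⌋ : ℤ) : ℝ) =
      G + ⌊x₀ + (i + j : ℕ) * (1 - α)⌋ := by
      have : ⌊x₀ + (i + j + m : ℕ) * (1 - α)⌋ = G + ⌊x₀ + (i + j : ℕ) * (1 - α)⌋ := by omega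
      exact_mod_cast this
    rw [h5] at h3 h4
    push_cast at *
    constructor <;> linarith
  have hb := best_aux (1 - α) η η' Q Q' m P P' G hdet hη' hle h hm hmQ
  have h0 := hf 0 (by omega)
  have hf0 := Int.fract_nonneg (x₀ + (i + 0 : ℕ) * (1 - α))
  have hf1 := Int.fract_lt_one (x₀ + (i + 0 : ℕ) * (1 - α))
  rcases le_abs.1 hb with hb | hb
  · obtain ⟨n, hn, k, hk1, hk2⟩ := hit_aux (1 - α) (x₀ + i * (1 - α)) (1 - η) η η' Q Q' P P'
      (by omega) hη' hle h
    have h5 := hf n (by omega)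
    have : Int.fract (x₀ + (i + n : ℕ) * (1 - α)) = x₀ + (i + n : ℕ) * (1 - α) - k := by
      rw [Int.fract_eq_iff]
      push_cast
      refine ⟨by linarith, by linarith, k, by ring⟩
    rw [this] at h5
    push_cast at h5
    linarith [h5.2]
  · obtain ⟨n, hn, k, hk1, hk2⟩ := hit_aux (1 - α) (x₀ + i * (1 - α)) 0 η η' Q Q' P P'
      (by omega) hη' hle h
    have h5 := hf n (by omega)
    have : Int.fract (x₀ + (i + n : ℕ) * (1 - α)) = x₀ + (i + n : ℕ) * (1 - α) - k := by
      rw [Int.fract_eq_iff]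
      push_cast
      refine ⟨by linarith, by linarith, k, by ring⟩
    rw [this] at h5
    push_cast at h5
    linarith [h5.1]

theorem run_lower (α x₀ η η' : ℝ) (hα0 : 0 < α) (hα1 : α < 1) (Q Q' : ℕ) (P P' : ℤ)
    (hdet : P * Q' - P' * Q = 1 ∨ P * Q' - P' * Q = -1) (hQ : 0 < Q) (hQ' : 0 < Q')
    (hη' : 0 < η') (hle : η' ≤ η)
    (h : (Q * (1 - α) - P = η ∧ Q' * (1 - α) - P' = -η') ∨
      (Q * (1 - α) - P = -η ∧ Q' * (1 - α) - P' = η'))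
    (hit : ∀ s : ℝ, ∃ i : ℕ, ∃ k : ℤ, s ≤ x₀ + i * (1 - α) - k ∧ x₀ + i * (1 - α) - k < s + η') :
    ∃ i : ℕ, ∀ j, j + 2 < Q + Q' →
      sturmianWord α x₀ (i + j + Q) = sturmianWord α x₀ (i + j) := by
  have hη : 0 < η := lt_of_lt_of_le hη' hle
  obtain ⟨M, hM⟩ : ∃ M, Q + Q' = M + 1 := ⟨Q + Q' - 1, by omega⟩
  suffices hs : ∃ i : ℕ, ∃ C : ℤ, ∀ j < M,
      ⌊x₀ + (i + j + Q : ℕ) * (1 - α)⌋ - ⌊x₀ + (i + j : ℕ) * (1 - α)⌋ = C by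
    obtain ⟨i, C, hC⟩ := hs
    refine ⟨i, fun j hj => ?_⟩
    rw [word_eq_iff α x₀ hα0 hα1, hC j (by omega)]
    exact hC (j + 1) (by omega)
  rcases h with h | h
  · obtain ⟨i, k, hk1, hk2⟩ := hit (-η' - M * (1 - α))
    refine ⟨i, P, fun j hj => ?_⟩
    have h2 := Int.floor_le (x₀ + (i + j : ℕ) * (1 - α))
    have h3 := Int.lt_floor_add_one (x₀ + (i + j : ℕ) * (1 - α))
    generalize ⌊x₀ + (i + j : ℕ) * (1 - α)⌋ = l at *
    have hg := gap_aux (1 - α) η η' Q Q' (M - j) P P' (k - (l + 1)) hdet hη' hη h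
      (by omega) (by omega)
    rw [Nat.cast_sub hj.le] at hg
    push_cast at *
    suffices ⌊x₀ + (i + j + Q) * (1 - α)⌋ = P + l by omega
    rw [Int.floor_eq_iff]
    push_cast
    refine ⟨by linarith, ?_⟩
    by_contra h7
    exact hg ⟨by linarith, by linarith⟩
  · obtain ⟨i, k, hk1, hk2⟩ := hit (- M * (1 - α))
    refine ⟨i, P - 1 + 1, fun j hj => ?_⟩
    have h2 := Int.floor_le (x₀ + (i + j : ℕ) * (1 - α))
    have h3 := Int.lt_floor_add_one (x₀ + (i + j : ℕ) * (1 - α))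
    generalize ⌊x₀ + (i + j : ℕ) * (1 - α)⌋ = l at *
    have hg := gap_aux (-(1 - α)) η η' Q Q' (M - j) (-P) (-P') (-(k - l))
      (by rcases hdet with h | h
          · right; linarith
          · left; linarith) hη' hη
      (by push_cast; constructor <;> linarith [h.1, h.2])
      (by omega) (by omega)
    rw [Nat.cast_sub hj.le] at hg
    push_cast at *
    suffices ⌊x₀ + (i + j + Q) * (1 - α)⌋ = P + l by omega
    rw [Int.floor_eq_iff]
    push_cast
    refine ⟨?_, by linarith⟩
    by_contra h7
    exact hg ⟨by linarith, by linarith⟩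

theorem factor_get (u : ℕ → Bool) (v : List Bool) (i j : ℕ) (h : FactorAt u v i)
    (hj : j < v.length) : v[j]? = some (u (i + j)) := by
  unfold FactorAt at h
  rw [h]
  simp [hj]

theorem pow_run (u : ℕ → Bool) (w v : List Bool) (h : IsFactor u v) (hp : FracPow w v) :
    ∃ i, ∀ j < v.length - w.length, u (i + j + w.length) = u (i + j) := by
  obtain ⟨i, hi⟩ := h
  obtain ⟨h1, h2, h3⟩ := hp
  refine ⟨i, fun j hj => ?_⟩
  have e1 := h3 j (by omega)
  have e2 := h3 (j + w.length) (by omega)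
  rw [Nat.add_mod_right, ← e1, factor_get u v i _ hi (by omega),
    factor_get u v i _ hi (by omega), ← add_assoc] at e2
  exact Option.some.inj e2

theorem self_mem (u : ℕ → Bool) (w : List Bool) (h : IsFactor u w) (hw : w ≠ []) :
    (expSet u w).Nonempty :=
  ⟨_, w, h, ⟨hw, le_rfl, fun i hi => by rw [Nat.mod_eq_of_lt hi]⟩, rfl⟩

theorem run_pow (u : ℕ → Bool) (i m K : ℕ) (hm : 0 < m)
    (h : ∀ j < K, u (i + j + m) = u (i + j)) :
    ∃ w, IsFactor u w ∧ w ≠ [] ∧ w.length = m ∧ ((m + K : ℕ) : ℝ) / m ∈ expSet u w := by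
  have hf : ∀ L, FactorAt u ((List.range L).map fun j => u (i + j)) i := by
    intro L; unfold FactorAt; simp
  have hmod : ∀ j < m + K, u (i + j) = u (i + j % m) := by
    intro j
    induction j using Nat.strong_induction_on with
    | _ j ih =>
      intro hj
      by_cases hc : j < m
      · rw [Nat.mod_eq_of_lt hc]
      · obtain ⟨t, rfl⟩ := Nat.exists_eq_add_of_le' (not_lt.mp hc)
        rw [Nat.add_mod_right, ← ih t (by omega) (by omega), ← add_assoc]
        exact h t (by omega)
  have hne : ((List.range m).map fun j => u (i + j)) ≠ [] := by
    intro h0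
    have := congrArg List.length h0
    simp at this; omega
  refine ⟨(List.range m).map fun j => u (i + j), ⟨i, hf m⟩, hne, by simp,
    (List.range (m + K)).map fun j => u (i + j), ⟨i, hf _⟩, ⟨hne, by simp, ?_⟩, by simp⟩
  intro j hj
  rw [factor_get u _ i j (hf _) hj]
  simp only [List.length_map, List.length_range] at hj ⊢
  rw [factor_get u _ i _ (hf _) (by simpa using Nat.mod_lt _ hm), hmod j hj]

/-- Carpi–de Luca / Damanik–Lenz: the index of a Sturmian word of
slope `α = [0,1,a₂,a₃,…]` equals `sup_{N≥1} (2 + a_{N+1} + (q_{N−1} − 2)/q_N)`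
(suprema taken in `EReal`, as both sides may be infinite). -/
theorem index_formula (α x₀ : ℝ) (hirr : Irrational α)
    (hα : 1/2 < α) (hα1 : α < 1) (hx0 : 0 ≤ x₀) (hx1 : x₀ < 1)
    (a p q : ℕ → ℕ) (ha1 : a 1 = 1) (hapos : ∀ n, 1 ≤ n → 1 ≤ a n)
    (hq0 : q 0 = 1) (hq1 : q 1 = 1)
    (hqrec : ∀ N, q (N + 2) = a (N + 2) * q (N + 1) + q N)
    (hp0 : p 0 = 0) (hp1 : p 1 = 1)
    (hprec : ∀ N, p (N + 2) = a (N + 2) * p (N + 1) + p N)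
    (hcf : Tendsto (fun N => (p N : ℝ) / (q N : ℝ)) atTop (nhds α)) :
    sSup ((fun w : List Bool => ((index (sturmianWord α x₀) w : ℝ) : EReal)) ''
        {w | IsFactor (sturmianWord α x₀) w ∧ w ≠ []}) =
    sSup ((fun N : ℕ =>
        ((2 + (a (N + 1) : ℝ) + ((q (N - 1) : ℝ) - 2) / (q N : ℝ) : ℝ) : EReal)) ''
        {N | 1 ≤ N}) := by
  have hα0 : 0 < α := by linarith
  have hqpos : ∀ n, 0 < q n := by
    intro n
    induction n using Nat.strong_induction_on with
    | _ n ih =>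
      match n with
      | 0 => omega
      | 1 => omega
      | n + 2 =>
        rw [hqrec]
        have := ih n (by omega)
        omega
  have hqmono : ∀ n, q (n + 1) < q (n + 2) := by
    intro n
    rw [hqrec]
    have h1 := hapos (n + 2) (by omega)
    have h2 := hqpos n
    nlinarith
  have hdet : ∀ n, ((p (n + 1) : ℤ) * q n - p n * q (n + 1)) = (-1) ^ n := by
    intro n
    induction n with
    | zero => simp [hp0, hp1, hq0]
    | succ n ih =>
      rw [hqrec, hprec, pow_succ, ← ih]
      push_cast
      ring
  obtain ⟨e, he⟩ : ∃ e : ℕ → ℝ, ∀ n, e n = (-1) ^ n * (q n * α - p n) := ⟨_, fun _ => rfl⟩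
  have herec : ∀ n, e n = a (n + 2) * e (n + 1) + e (n + 2) := by
    intro n
    rw [he, he, he, hqrec, hprec]
    push_cast
    ring
  have hepos : ∀ n, 0 < e n := by
    intro n
    have hge : 0 ≤ e n := by
      have hmono : Monotone (fun k : ℕ => (-1 : ℝ) ^ n * ((p (n + 2 * k) : ℝ) / q (n + 2 * k))) := by
        refine monotone_nat_of_le_succ fun k => ?_
        have h1 := hdet (n + 2 * k)
        have h1' : ((p (n + 2 * k + 1) : ℝ) * q (n + 2 * k) - p (n + 2 * k) * q (n + 2 * k + 1))
          = (-1) ^ n := by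
          have : ((p (n + 2 * k + 1) : ℝ) * q (n + 2 * k) - p (n + 2 * k) * q (n + 2 * k + 1))
            = (-1) ^ (n + 2 * k) := by exact_mod_cast h1
          rw [this, pow_add, pow_mul]; simp
        rw [show n + 2 * (k + 1) = n + 2 * k + 2 by ring]
        have hA : (0 : ℝ) < q (n + 2 * k) := by exact_mod_cast hqpos _
        have hB : (0 : ℝ) < q (n + 2 * k + 2) := by exact_mod_cast hqpos _
        have hd : (p (n + 2 * k + 2) : ℝ) / q (n + 2 * k + 2) - (p (n + 2 * k) : ℝ) / q (n + 2 * k)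
            = a (n + 2 * k + 2) * (-1) ^ n / (q (n + 2 * k + 2) * q (n + 2 * k)) := by
          rw [div_sub_div _ _ hB.ne' hA.ne', ← h1', hqrec, hprec]
          push_cast
          congr 1
          ring
        have hsq : ((-1 : ℝ) ^ n) * (-1) ^ n = 1 := by
          rw [← mul_pow]; simp
        have : (-1 : ℝ) ^ n * ((p (n + 2 * k + 2) : ℝ) / q (n + 2 * k + 2)
            - (p (n + 2 * k) : ℝ) / q (n + 2 * k))
            = a (n + 2 * k + 2) / (q (n + 2 * k + 2) * q (n + 2 * k)) := by
          rw [hd]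
          rw [mul_div_assoc', mul_left_comm, hsq, mul_one]
        have h5 : (0 : ℝ) ≤ a (n + 2 * k + 2) / (q (n + 2 * k + 2) * q (n + 2 * k)) := by positivity
        rw [← this] at h5
        linarith
      have hlim : Tendsto (fun k : ℕ => (-1 : ℝ) ^ n * ((p (n + 2 * k) : ℝ) / q (n + 2 * k)))
          atTop (nhds ((-1) ^ n * α)) := by
        refine Tendsto.const_mul _ ?_
        refine hcf.comp (tendsto_atTop_mono (fun k => ?_) tendsto_id)
        simp only [id]; omega
      have h6 := hmono.ge_of_tendsto hlim 0
      simp only [mul_zero, add_zero] at h6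
      have hA : (0 : ℝ) < q n := by exact_mod_cast hqpos _
      have h7 : e n = q n * ((-1) ^ n * α - (-1) ^ n * ((p n : ℝ) / q n)) := by
        rw [he]; field_simp
      rw [h7]
      exact mul_nonneg hA.le (by linarith)
    refine lt_of_le_of_ne hge (Ne.symm fun h0 => ?_)
    rw [he] at h0
    have h1 : (q n : ℝ) * α - p n = 0 := by
      rcases mul_eq_zero.1 h0 with h | h
      · exact absurd h (by simp)
      · exact h
    have hA : (0 : ℝ) < q n := by exact_mod_cast hqpos _
    refine hirr ⟨(p n : ℚ) / q n, ?_⟩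
    push_cast
    rw [div_eq_iff hA.ne']
    linarith
  have hele : ∀ n, e (n + 1) ≤ e n := by
    intro n
    rw [herec n]
    have h1 : (1 : ℝ) ≤ a (n + 2) := by exact_mod_cast hapos _ (by omega)
    have := hepos (n + 1)
    have := hepos (n + 2)
    nlinarith
  have hdet' : ∀ n, ((q n : ℤ) - p n) * q (n + 1) - ((q (n + 1) : ℤ) - p (n + 1)) * q n = 1 ∨
      ((q n : ℤ) - p n) * q (n + 1) - ((q (n + 1) : ℤ) - p (n + 1)) * q n = -1 := by
    intro n
    have h1 : ((q n : ℤ) - p n) * q (n + 1) - ((q (n + 1) : ℤ) - p (n + 1)) * q n = (-1) ^ n := by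
      rw [← hdet n]; ring
    rw [h1]
    exact neg_one_pow_eq_or ℤ n
  have hsgn : ∀ n, ((q n : ℝ) * (1 - α) - ((q n : ℤ) - p n : ℤ) = e n ∧
        (q (n + 1) : ℝ) * (1 - α) - ((q (n + 1) : ℤ) - p (n + 1) : ℤ) = - e (n + 1)) ∨
      ((q n : ℝ) * (1 - α) - ((q n : ℤ) - p n : ℤ) = - e n ∧
        (q (n + 1) : ℝ) * (1 - α) - ((q (n + 1) : ℤ) - p (n + 1) : ℤ) = e (n + 1)) := by
    intro n
    rw [he, he, pow_succ]
    push_cast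
    rcases neg_one_pow_eq_or ℝ n with h | h
    · right; rw [h]; constructor <;> ring
    · left; rw [h]; constructor <;> ring
  have hup : ∀ w : List Bool, w ≠ [] → ∃ n, ∀ r ∈ expSet (sturmianWord α x₀) w,
      r ≤ 2 + (a (n + 2) : ℝ) + ((q n : ℝ) - 2) / q (n + 1) := by
    intro w hw
    have hm : 0 < w.length := List.length_pos_iff.2 hw
    have hex : ∃ n, w.length < q (n + 2) := by
      have : ∀ n, n < q (n + 2) := by
        intro n
        induction n with
        | zero => exact hqpos _
        | succ n ih =>
          have h9 : q (n + 2) < q (n + 1 + 2) := hqmono (n + 1)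
          omega
      exact ⟨_, this _⟩
    have hfind := Nat.find_spec hex
    have hmin : q (Nat.find hex + 1) ≤ w.length := by
      by_cases h0 : Nat.find hex = 0
      · rw [h0, zero_add, hq1]; omega
      · have := Nat.find_min hex (m := Nat.find hex - 1) (by omega)
        rw [show Nat.find hex - 1 + 2 = Nat.find hex + 1 by omega] at this
        omega
    generalize Nat.find hex = n at hfind hmin
    refine ⟨n, ?_⟩
    rintro r ⟨v, hv, hp, rfl⟩
    obtain ⟨i, hi⟩ := pow_run _ w v hv hp
    have h1 := run_upper α x₀ (e (n + 1)) (e (n + 2)) hα0 hα1 (q (n + 1)) (q (n + 2)) w.length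
      _ _ (hdet' (n + 1)) (hepos _) (hele _) (hsgn (n + 1)) hm hfind i _ hi
    have h2 := hp.2.1
    have h3 : v.length + 2 ≤ w.length + q (n + 1) + q (n + 2) := by omega
    have h3' : (v.length : ℝ) + 2 ≤ w.length + q (n + 1) + q (n + 2) := by exact_mod_cast h3
    have hA : (0 : ℝ) < q (n + 1) := by exact_mod_cast hqpos _
    have hB : (0 : ℝ) < w.length := by exact_mod_cast hm
    have hAB : (q (n + 1) : ℝ) ≤ w.length := by exact_mod_cast hmin
    have hC : (0 : ℝ) ≤ q (n + 1) + q (n + 2) - 2 := by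
      have := hqpos (n + 1)
      have := hqpos (n + 2)
      have h : 2 ≤ q (n + 1) + q (n + 2) := by omega
      have : (2 : ℝ) ≤ q (n + 1) + q (n + 2) := by exact_mod_cast h
      linarith
    have hD : 2 + (a (n + 2) : ℝ) + ((q n : ℝ) - 2) / q (n + 1) =
        1 + (q (n + 1) + q (n + 2) - 2) / q (n + 1) := by
      rw [hqrec]; push_cast; field_simp; ring
    rw [hD]
    calc (v.length : ℝ) / w.length ≤ (w.length + (q (n + 1) + q (n + 2) - 2)) / w.length := by
          gcongr; linarith
      _ = 1 + (q (n + 1) + q (n + 2) - 2) / w.length := by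
          rw [add_div, div_self hB.ne']
      _ ≤ _ := by gcongr
  have hlow : ∀ n, ∃ w, IsFactor (sturmianWord α x₀) w ∧ w ≠ [] ∧
      2 + (a (n + 2) : ℝ) + ((q n : ℝ) - 2) / q (n + 1) ∈ expSet (sturmianWord α x₀) w := by
    intro n
    obtain ⟨i, hi⟩ := run_lower α x₀ (e (n + 1)) (e (n + 2)) hα0 hα1 (q (n + 1)) (q (n + 2))
      _ _ (hdet' (n + 1)) (hqpos _) (hqpos _) (hepos _) (hele _) (hsgn (n + 1))
      (fun s => by
        obtain ⟨i, -, k, hk⟩ := hit_aux (1 - α) x₀ s (e (n + 2)) (e (n + 3)) (q (n + 2)) (q (n + 3))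
          _ _ (hqpos _) (hepos _) (hele _) (hsgn (n + 2))
        exact ⟨i, k, hk⟩)
    have hge : 2 ≤ q (n + 1) + q (n + 2) := by
      have := hqpos (n + 1)
      have := hqpos (n + 2)
      omega
    obtain ⟨w, hw1, hw2, -, hw4⟩ := run_pow (sturmianWord α x₀) i (q (n + 1))
      (q (n + 1) + q (n + 2) - 2) (hqpos _) (fun j hj => hi j (by omega))
    refine ⟨w, hw1, hw2, ?_⟩
    convert hw4 using 1
    have hA : (0 : ℝ) < q (n + 1) := by exact_mod_cast hqpos _
    rw [Nat.cast_add, Nat.cast_sub hge, hqrec]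
    push_cast
    field_simp
    ring
  apply le_antisymm
  · apply sSup_le
    rintro _ ⟨w, ⟨hw1, hw2⟩, rfl⟩
    obtain ⟨n, hn⟩ := hup w hw2
    refine le_trans ?_ (le_sSup ⟨n + 1, by simp, rfl⟩)
    simp only [Nat.add_sub_cancel]
    rw [EReal.coe_le_coe_iff]
    exact csSup_le (self_mem _ w hw1 hw2) hn
  · apply sSup_le
    rintro _ ⟨N, hN, rfl⟩
    obtain ⟨n, rfl⟩ : ∃ n, N = n + 1 := ⟨N - 1, by simp only [Set.mem_ofPred_eq] at hN; omega⟩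
    obtain ⟨w, hw1, hw2, hw3⟩ := hlow n
    refine le_trans ?_ (le_sSup ⟨w, ⟨hw1, hw2⟩, rfl⟩)
    simp only [Nat.add_sub_cancel]
    rw [EReal.coe_le_coe_iff]
    obtain ⟨n', hn'⟩ := hup w hw2
    exact le_csSup ⟨_, hn'⟩ hw3


end SturmianPaper
end
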